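/- The spaces S_{14,2}(Γ₂,ε) and S_{16,2}(Γ₂,ε) are both zero. -/

import Mathlib

noncomputable section

open Matrix Complex Filter Topology

/-- The standard symplectic form matrix of size 4. -/
def J4 : Matrix (Fin 4) (Fin 4) ℤ := !![0,0,1,0; 0,0,0,1; -1,0,0,0; 0,-1,0,0]

/-- The Siegel modular group `Γ₂ = Sp(4,ℤ)`, as a set of 4×4 integer matrices. -/
def Sp4Z : Set (Matrix (Fin 4) (Fin 4) ℤ) := {γ | γᵀ * J4 * γ = J4}

/-- The principal congruence subgroup `Γ₂[2]` of level 2. -/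
def Sp4Z2 : Set (Matrix (Fin 4) (Fin 4) ℤ) :=
  {γ | γ ∈ Sp4Z ∧ ∀ i j, ((γ i j : ZMod 2) = if i = j then 1 else 0)}

/-- The Siegel upper half space of degree 2: symmetric 2×2 complex matrices with
positive definite imaginary part (encoded as functions `Fin 2 → Fin 2 → ℂ`). -/
def H2 : Set (Fin 2 → Fin 2 → ℂ) :=
  {τ | (Matrix.of τ).IsSymm ∧ (Matrix.of fun i j => (τ i j).im).PosDef}

/-- The four 2×2 blocks of a 4×4 integer matrix, as complex matrices. -/
def blk (γ : Matrix (Fin 4) (Fin 4) ℤ) (r s : Fin 2) : Matrix (Fin 2) (Fin 2) ℂ :=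
  Matrix.of fun i j =>
    ((γ ⟨2 * (r : ℕ) + (i : ℕ), by have h1 := r.isLt; have h2 := i.isLt; omega⟩
        ⟨2 * (s : ℕ) + (j : ℕ), by have h1 := s.isLt; have h2 := j.isLt; omega⟩ : ℤ) : ℂ)

/-- The factor `cτ + d`. -/
def den (γ : Matrix (Fin 4) (Fin 4) ℤ) (τ : Fin 2 → Fin 2 → ℂ) : Matrix (Fin 2) (Fin 2) ℂ :=
  blk γ 1 0 * Matrix.of τ + blk γ 1 1

/-- The action `γ·τ = (aτ+b)(cτ+d)⁻¹` of `Sp(4)` on the Siegel upper half space. -/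
def moeb (γ : Matrix (Fin 4) (Fin 4) ℤ) (τ : Fin 2 → Fin 2 → ℂ) : Fin 2 → Fin 2 → ℂ :=
  fun i j => ((blk γ 0 0 * Matrix.of τ + blk γ 0 1) * (den γ τ)⁻¹) i j

/-- Matrix coefficients of the `j`-th symmetric power of the standard representation of
`GL(2,ℂ)`, in the basis `x₁^(j-i) x₂^i`. -/
def symCoeff (j : ℕ) (m : Matrix (Fin 2) (Fin 2) ℂ) (l i : Fin (j + 1)) : ℂ :=
  (((Polynomial.C (m 0 0) + Polynomial.C (m 1 0) * Polynomial.X) ^ (j - (l : ℕ)) *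
    (Polynomial.C (m 0 1) + Polynomial.C (m 1 1) * Polynomial.X) ^ (l : ℕ)).coeff i)

/-- The `j`-th symmetric power `Sym^j(m)` acting on coordinate vectors. -/
def symAct (j : ℕ) (m : Matrix (Fin 2) (Fin 2) ℂ) (v : Fin (j + 1) → ℂ) : Fin (j + 1) → ℂ :=
  fun i => ∑ l, symCoeff j m l i * v l

lemma symAct_add (j : ℕ) (m : Matrix (Fin 2) (Fin 2) ℂ) (v w : Fin (j + 1) → ℂ) :
    symAct j m (v + w) = symAct j m v + symAct j m w := by
  funext i
  simp [symAct, mul_add, Finset.sum_add_distrib]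

lemma symAct_smul (j : ℕ) (m : Matrix (Fin 2) (Fin 2) ℂ) (a : ℂ) (v : Fin (j + 1) → ℂ) :
    symAct j m (a • v) = a • symAct j m v := by
  funext i
  simp only [symAct, Pi.smul_apply, smul_eq_mul, Finset.mul_sum]
  exact Finset.sum_congr rfl fun l _ => by ring

lemma symAct_zero (j : ℕ) (m : Matrix (Fin 2) (Fin 2) ℂ) : symAct j m 0 = 0 := by
  funext i; simp [symAct]

/-- The weight `(j,k)` automorphy action `Sym^j(m) ⊗ det(m)^k`. -/
def wt (j : ℕ) (k : ℤ) (m : Matrix (Fin 2) (Fin 2) ℂ) (v : Fin (j + 1) → ℂ) :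
    Fin (j + 1) → ℂ :=
  (m.det ^ k) • symAct j m v

lemma wt_add (j : ℕ) (k : ℤ) (m : Matrix (Fin 2) (Fin 2) ℂ) (v w : Fin (j + 1) → ℂ) :
    wt j k m (v + w) = wt j k m v + wt j k m w := by
  simp [wt, symAct_add, smul_add]

lemma wt_smul (j : ℕ) (k : ℤ) (m : Matrix (Fin 2) (Fin 2) ℂ) (a : ℂ) (v : Fin (j + 1) → ℂ) :
    wt j k m (a • v) = a • wt j k m v := by
  rw [wt, wt, symAct_smul, smul_comm]

lemma wt_zero (j : ℕ) (k : ℤ) (m : Matrix (Fin 2) (Fin 2) ℂ) : wt j k m 0 = 0 := by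
  simp [wt, symAct_zero]

/-- The slash operation `(F|γ)(τ) = Sym^j(cτ+d)⁻¹ det(cτ+d)⁻ᵏ F(γ·τ)`. -/
def slashS (j : ℕ) (k : ℤ) (γ : Matrix (Fin 4) (Fin 4) ℤ)
    (F : (Fin 2 → Fin 2 → ℂ) → (Fin (j + 1) → ℂ)) (τ : Fin 2 → Fin 2 → ℂ) :
    Fin (j + 1) → ℂ :=
  ((den γ τ).det ^ (-k)) • symAct j ((den γ τ)⁻¹) (F (moeb γ τ))

lemma slashS_add (j : ℕ) (k : ℤ) (γ : Matrix (Fin 4) (Fin 4) ℤ)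
    (F G : (Fin 2 → Fin 2 → ℂ) → (Fin (j + 1) → ℂ)) (τ : Fin 2 → Fin 2 → ℂ) :
    slashS j k γ (F + G) τ = slashS j k γ F τ + slashS j k γ G τ := by
  simp [slashS, symAct_add, smul_add]

lemma slashS_smul (j : ℕ) (k : ℤ) (γ : Matrix (Fin 4) (Fin 4) ℤ) (a : ℂ)
    (F : (Fin 2 → Fin 2 → ℂ) → (Fin (j + 1) → ℂ)) (τ : Fin 2 → Fin 2 → ℂ) :
    slashS j k γ (a • F) τ = a • slashS j k γ F τ := by
  simp only [slashS, Pi.smul_apply, symAct_smul]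
  rw [smul_comm]

lemma slashS_zero (j : ℕ) (k : ℤ) (γ : Matrix (Fin 4) (Fin 4) ℤ) (τ : Fin 2 → Fin 2 → ℂ) :
    slashS j k γ (0 : (Fin 2 → Fin 2 → ℂ) → (Fin (j + 1) → ℂ)) τ = 0 := by
  simp [slashS, symAct_zero]

/-- The diagonal point `diag(τ₁,τ₂)` of the Siegel upper half space. -/
def diagH (τ₁ τ₂ : ℂ) : Fin 2 → Fin 2 → ℂ :=
  fun i j => if i = j then (if i = 0 then τ₁ else τ₂) else 0

/-- `F` is a Siegel cusp form of degree 2 and weight `(j,k)` on `Γ`, with character `χ`: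
holomorphic on `ℍ₂`, transforming by `F(γ·τ) = χ(γ) Sym^j(cτ+d) det(cτ+d)^k F(τ)` for `γ ∈ Γ`,
with `(F|γ)(diag(τ₁,it)) → 0` as `t → ∞` for every `γ ∈ Γ₂`, and (normalization) vanishing
off `ℍ₂`. -/
def IsSiegelCuspForm (j : ℕ) (k : ℤ) (Γ : Set (Matrix (Fin 4) (Fin 4) ℤ))
    (χ : Matrix (Fin 4) (Fin 4) ℤ → ℂ)
    (F : (Fin 2 → Fin 2 → ℂ) → (Fin (j + 1) → ℂ)) : Prop :=
  DifferentiableOn ℂ F H2 ∧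
  (∀ γ ∈ Γ, ∀ τ ∈ H2, F (moeb γ τ) = χ γ • wt j k (den γ τ) (F τ)) ∧
  (∀ γ ∈ Sp4Z, ∀ τ₁ : ℂ, 0 < τ₁.im →
    Tendsto (fun t : ℝ => slashS j k γ F (diagH τ₁ (t * Complex.I))) atTop (𝓝 0)) ∧
  (∀ τ, τ ∉ H2 → F τ = 0)

/-- The space `S_{j,k}(Γ, χ)` of Siegel cusp forms of degree 2 and weight `(j,k)` on `Γ`
with character `χ`, as a complex vector space. -/
def SiegelCusp (j : ℕ) (k : ℤ) (Γ : Set (Matrix (Fin 4) (Fin 4) ℤ))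
    (χ : Matrix (Fin 4) (Fin 4) ℤ → ℂ) :
    Submodule ℂ ((Fin 2 → Fin 2 → ℂ) → (Fin (j + 1) → ℂ)) where
  carrier := {F | IsSiegelCuspForm j k Γ χ F}
  add_mem' := by
    rintro F G hF hG
    refine ⟨hF.1.add hG.1, ?_, ?_, ?_⟩
    · intro γ hγ τ hτ
      show F (moeb γ τ) + G (moeb γ τ) = χ γ • wt j k (den γ τ) (F τ + G τ)
      rw [wt_add, smul_add, hF.2.1 γ hγ τ hτ, hG.2.1 γ hγ τ hτ]
    · intro γ hγ τ₁ hτ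
      have h := (hF.2.2.1 γ hγ τ₁ hτ).add (hG.2.2.1 γ hγ τ₁ hτ)
      rw [add_zero] at h
      exact h.congr fun t => (slashS_add j k γ F G _).symm
    · intro τ hτ
      show F τ + G τ = 0
      rw [hF.2.2.2 τ hτ, hG.2.2.2 τ hτ, add_zero]
  zero_mem' := by
    refine ⟨?_, ?_, ?_, ?_⟩
    · exact differentiableOn_const 0
    · intro γ hγ τ hτ
      show (0 : Fin (j + 1) → ℂ) = χ γ • wt j k (den γ τ) 0
      rw [wt_zero, smul_zero]
    · intro γ hγ τ₁ hτ
      have : (fun t : ℝ => slashS j k γ (0 : (Fin 2 → Fin 2 → ℂ) → (Fin (j + 1) → ℂ))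
          (diagH τ₁ (t * Complex.I))) = fun _ => 0 := by
        funext t; exact slashS_zero j k γ _
      rw [this]
      exact tendsto_const_nhds
    · intro τ _; rfl
  smul_mem' := by
    rintro a F hF
    refine ⟨hF.1.const_smul a, ?_, ?_, ?_⟩
    · intro γ hγ τ hτ
      show a • F (moeb γ τ) = χ γ • wt j k (den γ τ) (a • F τ)
      rw [hF.2.1 γ hγ τ hτ, wt_smul, smul_comm]
    · intro γ hγ τ₁ hτ
      have h := (hF.2.2.1 γ hγ τ₁ hτ).const_smul a
      rw [smul_zero] at h
      exact h.congr fun t => (slashS_smul j k γ a F _).symm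
    · intro τ hτ
      show a • F τ = 0
      rw [hF.2.2.2 τ hτ, smul_zero]

/-- `ε` is (on `Γ₂`) the unique nontrivial homomorphism `Γ₂ → {±1}`. -/
def IsEps (ε : Matrix (Fin 4) (Fin 4) ℤ → ℂ) : Prop :=
  (∀ γ ∈ Sp4Z, ε γ = 1 ∨ ε γ = -1) ∧
  (∀ γ ∈ Sp4Z, ∀ δ ∈ Sp4Z, ε (γ * δ) = ε γ * ε δ) ∧
  (∃ γ ∈ Sp4Z, ε γ ≠ 1)

/-!
Write `Φ (a, z, b) = F (a z; z b)`; we show that `Φ` is divisible by every power of `z`, hence zero.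
If `Φ` is divisible by `z ^ N`, the restrictions to `z = 0` of the components of `Φ / z ^ N` are, in
each of the variables `a` and `b`, modular forms on `SL(2, ℤ)` with the character of `η ^ 12`, the
`i`-th one of weights `2 + N + j - i` and `2 + N + i`. A partial Fourier coefficient of `Φ` is, after
the shears `z ↦ z + b`, a trigonometric polynomial in `z` with few frequencies that vanishes to order
`N` at `0`; hence low Fourier coefficients of these forms vanish, and dividing by a power of `η ^ 12`
leaves forms of level one whose weight in one of the variables is negative or `2`. These are zero, so
`Φ` is divisible by `z ^ (N + 1)`.

For `N ≤ 1` some components escape the argument. They have weights below `18`, so they are multiples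
of `η ^ 12` times Eisenstein series in each variable, determined by their coefficient at `(1, 1)`.
That coefficient comes from the Fourier coefficient of `F` at the hexagonal form `n = r = m = 1`. The
latter is equivariant under the automorphism group of the hexagonal form and has three components
vanishing by weight considerations; for `j ≤ 16`, `j ≠ 12`, this forces it to be zero.
-/

/-! ### Fourier coefficients on horizontal lines -/

section LineCoeff

variable {E : Type*} [NormedAddCommGroup E] [NormedSpace ℂ E]

/-- The `n`-th Fourier coefficient, for the characters `exp (π i n z)` of period `2`, of a function
`f` on the horizontal line of height `y`. Period `2` accommodates functions with
`f (z + 1) = -f z`. -/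
def lineCoeff (n : ℤ) (y : ℝ) (f : ℂ → E) : E :=
  (1 / 2 : ℂ) • ∫ x in (0 : ℝ)..2, cexp (-(Real.pi * I * n * (x + y * I))) • f (x + y * I)

lemma lineCoeff_congr {n : ℤ} {y : ℝ} {f g : ℂ → E}
    (h : ∀ x : ℝ, f (x + y * I) = g (x + y * I)) : lineCoeff n y f = lineCoeff n y g := by
  simp only [lineCoeff, h]

lemma lineCoeff_zero (n : ℤ) (y : ℝ) : lineCoeff n y (fun _ => (0 : E)) = 0 := by
  simp [lineCoeff]

lemma lineCoeff_const_smul (n : ℤ) (y : ℝ) (c : ℂ) (f : ℂ → E) :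
    lineCoeff n y (fun z => c • f z) = c • lineCoeff n y f := by
  simp only [lineCoeff, smul_comm _ c, intervalIntegral.integral_smul]

lemma lineCoeff_neg (n : ℤ) (y : ℝ) (f : ℂ → E) :
    lineCoeff n y (fun z => -f z) = -lineCoeff n y f := by
  simpa using lineCoeff_const_smul n y (-1) f

lemma intervalIntegrable_lineCoeff {n : ℤ} {y : ℝ} {f : ℂ → E}
    (hf : Continuous fun x : ℝ => f (x + y * I)) (a b : ℝ) :
    IntervalIntegrable (fun x : ℝ => cexp (-(Real.pi * I * n * (x + y * I))) • f (x + y * I))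
      MeasureTheory.volume a b :=
  Continuous.intervalIntegrable (.smul (by fun_prop) hf) a b

lemma lineCoeff_sub (n : ℤ) (y : ℝ) {f g : ℂ → E} (hf : Continuous fun x : ℝ => f (x + y * I))
    (hg : Continuous fun x : ℝ => g (x + y * I)) :
    lineCoeff n y (fun z => f z - g z) = lineCoeff n y f - lineCoeff n y g := by
  simp only [lineCoeff, smul_sub]
  rw [intervalIntegral.integral_sub (intervalIntegrable_lineCoeff hf _ _)
    (intervalIntegrable_lineCoeff hg _ _), smul_sub]

lemma lineCoeff_clm_comp [CompleteSpace E] {F : Type*} [NormedAddCommGroup F] [NormedSpace ℂ F]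
    [CompleteSpace F] (L : E →L[ℂ] F) (n : ℤ) (y : ℝ) {f : ℂ → E}
    (hf : Continuous fun x : ℝ => f (x + y * I)) :
    lineCoeff n y (fun z => L (f z)) = L (lineCoeff n y f) := by
  simp only [lineCoeff, map_smul, ← L.intervalIntegral_comp_comm
    (intervalIntegrable_lineCoeff hf _ _)]

lemma lineCoeff_exp_smul (n s : ℤ) (y : ℝ) (f : ℂ → E) :
    lineCoeff n y (fun z => cexp (Real.pi * I * s * z) • f z) = lineCoeff (n - s) y f := by
  have hexp (x : ℝ) : -(Real.pi * I * n * (x + y * I)) + Real.pi * I * s * (x + y * I) =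
      -(Real.pi * I * (n - s : ℤ) * (x + y * I)) := by push_cast; ring
  simp only [lineCoeff, smul_smul, ← Complex.exp_add, hexp]

lemma periodic_lineCoeff_integrand (n : ℤ) {y : ℝ} {f : ℂ → E}
    (hp : ∀ x : ℝ, f (x + y * I + 2) = f (x + y * I)) :
    Function.Periodic
      (fun x : ℝ => cexp (-(Real.pi * I * n * (x + y * I))) • f (x + y * I)) 2 := by
  intro x
  have hx : ((x + 2 : ℝ) : ℂ) + y * I = x + y * I + 2 := by push_cast; ring
  simp only [hx, hp]
  congr 1
  rw [Complex.exp_eq_exp_iff_exists_int]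
  exact ⟨-n, by push_cast; ring⟩

lemma lineCoeff_comp_add_const (n : ℤ) {y y' : ℝ} (s : ℂ) (f : ℂ → E) (hy : y + s.im = y')
    (hp : ∀ x : ℝ, f (x + y' * I + 2) = f (x + y' * I)) :
    lineCoeff n y (fun z => f (z + s)) = cexp (Real.pi * I * n * s) • lineCoeff n y' f := by
  have hper := (periodic_lineCoeff_integrand n hp).intervalIntegral_add_eq s.re 0
  have hshift (x : ℝ) : (x : ℂ) + y * I + s = ((x + s.re : ℝ) : ℂ) + y' * I := by
    rw [← hy]
    push_cast
    linear_combination -Complex.re_add_im s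
  have hexp (x : ℝ) : -(Real.pi * I * n * (x + y * I)) =
      Real.pi * I * n * s + -(Real.pi * I * n * ((x + s.re : ℝ) + y' * I)) := by
    rw [← hshift]
    ring
  simp only [lineCoeff, hshift, hexp, Complex.exp_add, mul_smul]
  rw [intervalIntegral.integral_smul, smul_comm, intervalIntegral.integral_comp_add_right
    (fun x : ℝ => cexp (-(Real.pi * I * n * (x + y' * I))) • f (x + y' * I))]
  simp only [zero_add] at hper ⊢
  rw [← hper, add_comm s.re]

lemma lineCoeff_comp_neg (n : ℤ) (y : ℝ) (f : ℂ → E)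
    (hp : ∀ x : ℝ, f (x + (-y : ℝ) * I + 2) = f (x + (-y : ℝ) * I)) :
    lineCoeff n y (fun z => f (-z)) = lineCoeff (-n) (-y) f := by
  have hper := (periodic_lineCoeff_integrand (-n) hp).intervalIntegral_add_eq (-2) 0
  have hneg (x : ℝ) : -((x : ℂ) + y * I) = ((-x : ℝ) : ℂ) + (-y : ℝ) * I := by push_cast; ring
  have hexp (x : ℝ) : -(Real.pi * I * n * (x + y * I)) =
      -(Real.pi * I * ((-n : ℤ) : ℂ) * ((-x : ℝ) + (-y : ℝ) * I)) := by push_cast; ring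
  simp only [lineCoeff, hneg, hexp]
  rw [intervalIntegral.integral_comp_neg
    (fun x : ℝ => cexp (-(Real.pi * I * ((-n : ℤ) : ℂ) * (x + (-y : ℝ) * I))) •
      f (x + (-y : ℝ) * I))]
  simpa using congrArg ((1 / 2 : ℂ) • ·) hper

lemma lineCoeff_eq_zero_of_antiperiodic {n : ℤ} {y : ℝ} {f : ℂ → E}
    (hp : ∀ x : ℝ, f (x + y * I + 1) = -f (x + y * I)) (hn : Even n) : lineCoeff n y f = 0 := by
  have hp2 (x : ℝ) : f (x + y * I + 2) = f (x + y * I) := by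
    have h := hp (x + 1)
    rw [show ((x + 1 : ℝ) : ℂ) + y * I = x + y * I + 1 by push_cast; ring, hp, neg_neg] at h
    rw [← h]
    ring_nf
  have hexp : cexp (Real.pi * I * n * 1) = 1 := by
    obtain ⟨k, rfl⟩ := hn
    rw [Complex.exp_eq_one_iff]
    exact ⟨k, by push_cast; ring⟩
  have h := lineCoeff_comp_add_const n (y := y) 1 f (by simp) hp2
  rw [lineCoeff_congr (g := fun z => -f z) hp, lineCoeff_neg, hexp, one_smul,
    neg_eq_iff_add_eq_zero, ← two_smul ℂ] at h
  exact (smul_eq_zero_iff_right two_ne_zero).mp h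

lemma lineCoeff_eq_of_differentiableOn (n : ℤ) {y₁ y₂ : ℝ} {f : ℂ → E}
    (hp : ∀ z : ℂ, z.im ∈ Set.uIcc y₁ y₂ → f (z + 2) = f z)
    (hd : DifferentiableOn ℂ f {z | z.im ∈ Set.uIcc y₁ y₂}) :
    lineCoeff n y₁ f = lineCoeff n y₂ f := by
  set P : ℂ → E := fun z => cexp (-(Real.pi * I * n * z)) • f z with hP
  have hPd : DifferentiableOn ℂ P {z | z.im ∈ Set.uIcc y₁ y₂} := .smul (by fun_prop) hd
  have hrect := Complex.integral_boundary_rect_eq_zero_of_differentiableOn P (y₁ * I) (2 + y₂ * I)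
    (hPd.mono fun z hz => by simpa using (Complex.mem_reProdIm.mp hz).2)
  have hsides : ∫ y in y₁..y₂, P (2 + y * I) = ∫ y in y₁..y₂, P (y * I) := by
    refine intervalIntegral.integral_congr fun y hy => ?_
    simp only [hP]
    rw [add_comm (2 : ℂ), hp _ (by simpa using hy)]
    congr 1
    rw [Complex.exp_eq_exp_iff_exists_int]
    exact ⟨-n, by push_cast; ring⟩
  simp only [mul_re, ofReal_re, I_re, mul_zero, ofReal_im, I_im, mul_one, sub_self, ofReal_zero,
    add_re, re_ofNat, add_zero, mul_im, zero_add, add_im, im_ofNat, ofReal_ofNat, hsides,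
    add_sub_cancel_right] at hrect
  exact congrArg ((1 / 2 : ℂ) • ·) (sub_eq_zero.mp hrect)

lemma norm_lineCoeff_le (n : ℤ) {y C : ℝ} {f : ℂ → E}
    (h : ∀ x ∈ Set.Icc (0 : ℝ) 2, ‖f (x + y * I)‖ ≤ C) :
    ‖lineCoeff n y f‖ ≤ Real.exp (Real.pi * n * y) * C := by
  have hint : ‖∫ x in (0 : ℝ)..2, cexp (-(Real.pi * I * n * (x + y * I))) • f (x + y * I)‖
      ≤ (Real.exp (Real.pi * n * y) * C) * |2 - 0| := by
    refine intervalIntegral.norm_integral_le_of_norm_le_const fun x hx => ?_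
    rw [Set.uIoc_of_le zero_le_two] at hx
    rw [norm_smul, Complex.norm_exp,
      show (-(Real.pi * I * n * (x + y * I)) : ℂ).re = Real.pi * n * y by simp]
    exact mul_le_mul_of_nonneg_left (h x ⟨hx.1.le, hx.2⟩) (Real.exp_pos _).le
  rw [lineCoeff, norm_smul]
  norm_num at hint ⊢
  linarith

lemma continuous_lineCoeff {X : Type*} [TopologicalSpace X] (n : ℤ) {y : ℝ} {f : X → ℂ → E}
    (hf : Continuous fun p : X × ℝ => f p.1 (p.2 + y * I)) :
    Continuous fun p : X => lineCoeff n y (f p) := by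
  refine (intervalIntegral.continuous_parametric_intervalIntegral_of_continuous'
    ?_ _ _).const_smul _
  simp only [Function.uncurry_def]
  exact .smul (by fun_prop) hf

lemma lineCoeff_comm (n m : ℤ) {y y' : ℝ} {f : ℂ → ℂ → E}
    (hf : Continuous fun p : ℝ × ℝ => f (p.1 + y * I) (p.2 + y' * I)) :
    lineCoeff n y (fun a => lineCoeff m y' (fun b => f a b)) =
      lineCoeff m y' (fun b => lineCoeff n y (fun a => f a b)) := by
  set P : ℝ → ℝ → E := fun x x' => cexp (-(Real.pi * I * n * (x + y * I))) •
    cexp (-(Real.pi * I * m * (x' + y' * I))) • f (x + y * I) (x' + y' * I) with hP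
  have hint : MeasureTheory.IntegrableOn (Function.uncurry P) (Set.uIoc 0 2 ×ˢ Set.uIoc 0 2) := by
    have hc : Continuous (Function.uncurry P) := by
      simp only [Function.uncurry_def, hP]
      exact .smul (by fun_prop) (.smul (by fun_prop) hf)
    refine (hc.continuousOn.integrableOn_compact (K := Set.Icc 0 2 ×ˢ Set.Icc 0 2)
      (isCompact_Icc.prod isCompact_Icc)).mono_set ?_
    rw [Set.uIoc_of_le zero_le_two]
    exact Set.prod_mono Set.Ioc_subset_Icc_self Set.Ioc_subset_Icc_self
  have hleft : lineCoeff n y (fun a => lineCoeff m y' (fun b => f a b)) =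
      (1 / 2 : ℂ) • (1 / 2 : ℂ) • ∫ x in (0 : ℝ)..2, ∫ x' in (0 : ℝ)..2, P x x' := by
    simp only [lineCoeff, hP, intervalIntegral.integral_smul, smul_comm (cexp _) (1 / 2 : ℂ)]
  have hright : lineCoeff m y' (fun b => lineCoeff n y (fun a => f a b)) =
      (1 / 2 : ℂ) • (1 / 2 : ℂ) • ∫ x' in (0 : ℝ)..2, ∫ x in (0 : ℝ)..2, P x x' := by
    have hcomm (x x' : ℝ) : P x x' = cexp (-(Real.pi * I * m * (x' + y' * I))) •
        cexp (-(Real.pi * I * n * (x + y * I))) • f (x + y * I) (x' + y' * I) := smul_comm _ _ _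
    simp only [lineCoeff, hcomm, intervalIntegral.integral_smul, smul_comm (cexp _) (1 / 2 : ℂ)]
  rw [hleft, hright, MeasureTheory.intervalIntegral_intervalIntegral_swap hint]

lemma hasSum_lineCoeff {y : ℝ} {f : ℂ → ℂ} (hc : Continuous fun x : ℝ => f (x + y * I))
    (hp : ∀ x : ℝ, f (x + y * I + 2) = f (x + y * I))
    (hs : Summable fun n : ℤ => lineCoeff n y f * cexp (Real.pi * I * n * (y * I))) (x : ℝ) :
    HasSum (fun n : ℤ => lineCoeff n y f * cexp (Real.pi * I * n * (x + y * I)))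
      (f (x + y * I)) := by
  have : Fact (0 < (2 : ℝ)) := ⟨two_pos⟩
  have hper : Function.Periodic (fun x : ℝ => f (x + y * I)) 2 := fun x => by
    simp only
    rw [← hp x]
    push_cast
    ring_nf
  let g : C(AddCircle (2 : ℝ), ℂ) := ⟨hper.lift, continuous_coinduced_dom.mpr hc⟩
  have hg (x : ℝ) : g (x : AddCircle (2 : ℝ)) = f (x + y * I) := rfl
  have hcoeff (n : ℤ) :
      fourierCoeff g n = lineCoeff n y f * cexp (Real.pi * I * n * (y * I)) := by
    rw [fourierCoeff_eq_intervalIntegral g n 0, lineCoeff, smul_eq_mul, mul_assoc,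
      mul_comm _ (cexp _), ← intervalIntegral.integral_const_mul, zero_add, Complex.real_smul]
    congr! 3
    · norm_num
    · rw [hg, fourier_coe_apply, smul_eq_mul, smul_eq_mul, ← mul_assoc, ← Complex.exp_add]
      congr 2
      push_cast
      ring
  have hsum := has_pointwise_sum_fourier_series_of_summable
    (hs.congr fun n => (hcoeff n).symm) (x : AddCircle (2 : ℝ))
  rw [hg] at hsum
  convert hsum using 2 with n
  rw [hcoeff, fourier_coe_apply, smul_eq_mul, mul_assoc (lineCoeff n y f), ← Complex.exp_add]
  congr 2
  push_cast
  ring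

lemma eq_sum_lineCoeff {y : ℝ} {f : ℂ → ℂ} (hc : Continuous fun x : ℝ => f (x + y * I))
    (hp : ∀ x : ℝ, f (x + y * I + 2) = f (x + y * I)) (s : Finset ℤ)
    (hs : ∀ n ∉ s, lineCoeff n y f = 0) (x : ℝ) :
    f (x + y * I) = ∑ n ∈ s, lineCoeff n y f * cexp (Real.pi * I * n * (x + y * I)) := by
  have hoff (z : ℂ) (n : ℤ) (hn : n ∉ s) : lineCoeff n y f * cexp (Real.pi * I * n * z) = 0 := by
    rw [hs n hn, zero_mul]
  exact (hasSum_lineCoeff hc hp (summable_of_ne_finset_zero (hoff _)) x).unique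
    (hasSum_sum_of_ne_finset_zero (hoff _))

lemma eq_zero_of_lineCoeff_eq_zero [CompleteSpace E] {y : ℝ} {f : ℂ → E}
    (hc : Continuous fun x : ℝ => f (x + y * I))
    (hp : ∀ x : ℝ, f (x + y * I + 2) = f (x + y * I)) (h0 : ∀ n, lineCoeff n y f = 0) (x : ℝ) :
    f (x + y * I) = 0 := by
  refine SeparatingDual.eq_zero_of_forall_dual_eq_zero (R := ℂ) fun ℓ => ?_
  simpa using eq_sum_lineCoeff (f := fun z => ℓ (f z)) (ℓ.continuous.comp hc)
    (fun x => congrArg ℓ (hp x)) ∅ (fun n _ => by rw [lineCoeff_clm_comp ℓ n y hc, h0, map_zero]) x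

end LineCoeff

section Decay

variable {f : ℂ → ℂ}

lemma continuous_line {E : Type*} [NormedAddCommGroup E] [NormedSpace ℂ E] {f : ℂ → E}
    (hd : DifferentiableOn ℂ f {z | 0 < z.im}) {y : ℝ} (hy : 0 < y) :
    Continuous fun x : ℝ => f (x + y * I) :=
  hd.continuousOn.comp_continuous (by fun_prop) fun x => by simpa using hy

lemma lineCoeff_eq_of_pos (hd : DifferentiableOn ℂ f {z | 0 < z.im})
    (hp : ∀ z : ℂ, 0 < z.im → f (z + 2) = f z) (n : ℤ) {y₁ y₂ : ℝ} (h₁ : 0 < y₁) (h₂ : 0 < y₂) :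
    lineCoeff n y₁ f = lineCoeff n y₂ f := by
  have hpos : ∀ z : ℂ, z.im ∈ Set.uIcc y₁ y₂ → 0 < z.im := fun z hz =>
    (lt_min h₁ h₂).trans_le hz.1
  exact lineCoeff_eq_of_differentiableOn n (fun z hz => hp z (hpos z hz)) (hd.mono hpos)

lemma exists_norm_le_of_lineCoeff_neg_eq_zero (hd : DifferentiableOn ℂ f {z | 0 < z.im})
    (hp : ∀ z : ℂ, 0 < z.im → f (z + 2) = f z) (h0 : ∀ n : ℤ, n < 0 → lineCoeff n 1 f = 0) :
    ∃ C, ∀ z : ℂ, 2 ≤ z.im → ‖f z‖ ≤ C := by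
  obtain ⟨C, hC⟩ := (isCompact_Icc (a := (0 : ℝ)) (b := 2)).exists_bound_of_continuousOn
    (continuous_line hd one_pos).continuousOn
  have hC0 : 0 ≤ C := (norm_nonneg _).trans (hC 0 (by simp))
  have hoff (z : ℂ) (n : ℤ) (hn : n ∉ Set.range ((↑) : ℕ → ℤ)) :
      lineCoeff n 1 f * cexp (Real.pi * I * n * z) = 0 := by
    rw [h0 n (not_le.mp fun h => hn ⟨n.toNat, Int.toNat_of_nonneg h⟩), zero_mul]
  have hterm (z : ℂ) (hz : 2 ≤ z.im) (k : ℕ) :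
      ‖lineCoeff k 1 f * cexp (Real.pi * I * (k : ℤ) * z)‖ ≤ C * Real.exp (-Real.pi) ^ k := by
    have hre : (Real.pi * I * (k : ℤ) * z : ℂ).re = -(Real.pi * k * z.im) := by simp
    have hle : Real.pi * k * 2 ≤ Real.pi * k * z.im := mul_le_mul_of_nonneg_left hz (by positivity)
    rw [norm_mul, Complex.norm_exp, hre]
    calc ‖lineCoeff (k : ℤ) 1 f‖ * Real.exp (-(Real.pi * k * z.im))
        ≤ Real.exp (Real.pi * (k : ℤ) * 1) * C * Real.exp (-(Real.pi * k * z.im)) :=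
          mul_le_mul_of_nonneg_right (norm_lineCoeff_le k hC) (Real.exp_pos _).le
      _ = C * Real.exp (Real.pi * k - Real.pi * k * z.im) := by
          rw [mul_comm _ C, mul_assoc, ← Real.exp_add]
          simp [sub_eq_add_neg]
      _ ≤ C * Real.exp (-Real.pi) ^ k := by
          rw [← Real.exp_nat_mul]
          gcongr
          linarith
  have hgeo := summable_geometric_of_lt_one (Real.exp_pos (-Real.pi)).le
    (Real.exp_lt_one_iff.mpr (neg_lt_zero.mpr Real.pi_pos))
  refine ⟨C * ∑' k : ℕ, Real.exp (-Real.pi) ^ k, fun z hz => ?_⟩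
  have hz0 : 0 < z.im := two_pos.trans_le hz
  have hsum := hasSum_lineCoeff (continuous_line hd hz0)
    (fun x => hp _ (by simpa using hz0)) (by
      simp only [lineCoeff_eq_of_pos hd hp _ hz0 one_pos]
      rw [← Nat.cast_injective.summable_iff (hoff _)]
      exact .of_norm_bounded (hgeo.mul_left _) (hterm (z.im * I) (by simpa using hz))) z.re
  simp only [Complex.re_add_im, lineCoeff_eq_of_pos hd hp _ hz0 one_pos] at hsum
  rw [← Nat.cast_injective.hasSum_iff (hoff z)] at hsum
  rw [← hsum.tsum_eq]
  exact tsum_of_norm_bounded (hgeo.hasSum.mul_left C) (hterm z hz)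

lemma exists_norm_le_exp_of_lineCoeff_eq_zero (hd : DifferentiableOn ℂ f {z | 0 < z.im})
    (hp : ∀ z : ℂ, 0 < z.im → f (z + 2) = f z) (M : ℤ)
    (h0 : ∀ n : ℤ, n < M → lineCoeff n 1 f = 0) :
    ∃ C, ∀ z : ℂ, 2 ≤ z.im → ‖f z‖ ≤ C * Real.exp (-(Real.pi * M * z.im)) := by
  have hexp : Differentiable ℂ fun z => cexp (Real.pi * I * ((-M : ℤ) : ℂ) * z) := by fun_prop
  obtain ⟨C, hC⟩ := exists_norm_le_of_lineCoeff_neg_eq_zero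
    (f := fun z => cexp (Real.pi * I * ((-M : ℤ) : ℂ) * z) • f z)
    (hexp.differentiableOn.smul hd)
    (fun z hz => by
      rw [hp z hz]
      congr 1
      rw [Complex.exp_eq_exp_iff_exists_int]
      exact ⟨-M, by push_cast; ring⟩)
    (fun n hn => by rw [lineCoeff_exp_smul]; exact h0 _ (by omega))
  refine ⟨C, fun z hz => ?_⟩
  have h := hC z hz
  rw [norm_smul, Complex.norm_exp,
    show (Real.pi * I * ((-M : ℤ) : ℂ) * z).re = Real.pi * M * z.im by simp] at h
  rwa [Real.exp_neg, ← div_eq_mul_inv, le_div_iff₀' (Real.exp_pos _)]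

end Decay

/-! ### Elliptic modular forms with the sign character -/

section SignModular

open UpperHalfPlane hiding I
open ModularForm MatrixGroups

lemma im_neg_one_div_pos {z : ℂ} (hz : 0 < z.im) : 0 < (-1 / z).im := by
  rw [show -1 / z = (-z)⁻¹ by rw [inv_neg, neg_div, one_div]]
  exact UpperHalfPlane.im_inv_neg_coe_pos ⟨z, hz⟩

/-- `g` is holomorphic on the upper half-plane and transforms in weight `w` under `SL(2, ℤ)` with
the sign character, i.e. the character of `η ^ 12`. There is no condition at the cusp. -/
structure IsSignModular (w : ℤ) (g : ℂ → ℂ) : Prop where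
  differentiableOn : DifferentiableOn ℂ g {z | 0 < z.im}
  map_add_one : ∀ z : ℂ, 0 < z.im → g (z + 1) = -g z
  map_neg_one_div : ∀ z : ℂ, 0 < z.im → g (-1 / z) = -z ^ w * g z

lemma eta_add_one_pow_twelve (z : ℂ) : η (z + 1) ^ 12 = -η z ^ 12 := by
  have hq (n : ℕ) : eta_q n (z + 1) = eta_q n z := by
    rw [eta_q_eq_cexp, eta_q_eq_cexp, Complex.exp_eq_exp_iff_exists_int]
    exact ⟨n + 1, by push_cast; ring⟩
  have hexp : cexp ((12 : ℕ) * (2 * Real.pi * I * (z + 1) / (24 : ℝ))) =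
      -cexp ((12 : ℕ) * (2 * Real.pi * I * z / (24 : ℝ))) := by
    rw [← Complex.exp_add_pi_mul_I]
    congr 1
    push_cast
    ring
  simp only [ModularForm.eta, hq, mul_pow, Function.Periodic.qParam, ← Complex.exp_nat_mul]
  rw [hexp, neg_mul]

lemma eta_neg_one_div_pow_twelve {z : ℂ} (hz : 0 < z.im) :
    η (-1 / z) ^ 12 = -z ^ 6 * η z ^ 12 := by
  have hz0 : z ≠ 0 := by rintro rfl; simp at hz
  have hsqrt (w : ℂ) (hw : w ≠ 0) : Complex.sqrt w ^ 12 = w ^ 6 := by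
    rw [_root_.sqrt_eq_exp hw, ← Complex.exp_nat_mul,
      show ((12 : ℕ) : ℂ) * (Complex.log w / 2) = (6 : ℕ) * Complex.log w by push_cast; ring,
      Complex.exp_nat_mul, Complex.exp_log hw]
  have hS := eta_comp_eq_csqrt_I_inv (show z ∈ upperHalfPlaneSet from hz)
  simp only [Function.comp, Pi.smul_apply, Pi.mul_apply, smul_eq_mul] at hS
  rw [hS, mul_pow, mul_pow, inv_pow, hsqrt z hz0, hsqrt I I_ne_zero,
    show I ^ 6 = -1 by rw [pow_succ, pow_succ, I_pow_four]; simp]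
  ring

lemma isSignModular_eta_pow {M : ℕ} (hM : Odd M) :
    IsSignModular (6 * M) fun z => η z ^ (12 * M) where
  differentiableOn _ hz :=
    ((differentiableAt_eta_of_mem_upperHalfPlaneSet hz).pow _).differentiableWithinAt
  map_add_one z _ := by rw [pow_mul, eta_add_one_pow_twelve, hM.neg_pow, pow_mul]
  map_neg_one_div z hz := by
    rw [pow_mul, eta_neg_one_div_pow_twelve hz, mul_pow, hM.neg_pow, ← pow_mul, pow_mul (η z)]
    norm_cast

namespace IsSignModular

variable {w w' : ℤ} {g h : ℂ → ℂ}

lemma const_mul (hg : IsSignModular w g) (c : ℂ) : IsSignModular w fun z => c * g z where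
  differentiableOn := hg.differentiableOn.const_mul c
  map_add_one z hz := by rw [hg.map_add_one z hz, mul_neg]
  map_neg_one_div z hz := by rw [hg.map_neg_one_div z hz, mul_left_comm]

lemma sub (hg : IsSignModular w g) (hh : IsSignModular w h) :
    IsSignModular w fun z => g z - h z where
  differentiableOn := hg.differentiableOn.sub hh.differentiableOn
  map_add_one z hz := by rw [hg.map_add_one z hz, hh.map_add_one z hz]; ring
  map_neg_one_div z hz := by rw [hg.map_neg_one_div z hz, hh.map_neg_one_div z hz]; ring

lemma congr (hg : IsSignModular w g) (hgh : ∀ z : ℂ, 0 < z.im → h z = g z) :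
    IsSignModular w h where
  differentiableOn := hg.differentiableOn.congr hgh
  map_add_one z hz := by rw [hgh _ (by simpa using hz), hgh z hz, hg.map_add_one z hz]
  map_neg_one_div z hz := by
    rw [hgh _ (im_neg_one_div_pos hz), hgh z hz, hg.map_neg_one_div z hz]

lemma map_add_two (hg : IsSignModular w g) {z : ℂ} (hz : 0 < z.im) : g (z + 2) = g z := by
  rw [← one_add_one_eq_two, ← add_assoc, hg.map_add_one _ (by simpa using hz), hg.map_add_one z hz,
    neg_neg]

lemma div_slash_S (hg : IsSignModular w g) (hh : IsSignModular w' h) :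
    (fun τ : ℍ => g τ / h τ) ∣[w - w'] ModularGroup.S = fun τ : ℍ => g τ / h τ := by
  ext z
  have hz : (z : ℂ) ≠ 0 := z.ne_zero
  rw [SL_slash_apply, modular_S_smul, ModularGroup.denom_S, UpperHalfPlane.coe_mk,
    show (-z : ℂ)⁻¹ = -1 / z by rw [inv_neg, neg_div, one_div],
    hg.map_neg_one_div z z.2, hh.map_neg_one_div z z.2, neg_mul, neg_mul, neg_div_neg_eq,
    mul_div_mul_comm, neg_sub, zpow_sub₀ hz, mul_right_comm,
    div_mul_div_cancel₀ (zpow_ne_zero _ hz), div_self (zpow_ne_zero _ hz), one_mul]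

lemma div_slash_T (hg : IsSignModular w g) (hh : IsSignModular w' h) (k : ℤ) :
    (fun τ : ℍ => g τ / h τ) ∣[k] ModularGroup.T = fun τ : ℍ => g τ / h τ := by
  ext z
  have hden : denom ModularGroup.T z = 1 := by
    simp [ModularGroup.denom_apply, ModularGroup.coe_T]
  have hT : (((1 : ℝ) +ᵥ z : ℍ) : ℂ) = z + 1 := by rw [coe_vadd, ofReal_one, add_comm]
  rw [SL_slash_apply, modular_T_smul, hden, hT, hg.map_add_one z z.2, hh.map_add_one z z.2,
    neg_div_neg_eq, _root_.one_zpow, mul_one]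

end IsSignModular

lemma isBoundedAtImInfty_div_eta_pow {g : ℂ → ℂ} {M : ℕ} {C : ℝ}
    (hC : ∀ z : ℂ, 2 ≤ z.im → ‖g z‖ ≤ C * Real.exp (-(Real.pi * M * z.im))) :
    IsBoundedAtImInfty fun τ : ℍ => g τ / η τ ^ (12 * M) := by
  have hg : (fun τ : ℍ => g τ) =O[atImInfty] fun τ => Real.exp (-(Real.pi * M * τ.im)) :=
    .of_bound C <| (atImInfty_mem _).mpr ⟨2, fun τ hτ => by
      simpa only [Set.mem_ofPred_eq, Real.norm_eq_abs, Real.abs_exp] using! hC τ hτ⟩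
  have hsq : (fun τ : ℍ => g τ ^ 2) =O[atImInfty] fun τ => discriminant τ ^ M :=
    ((hg.pow 2).congr_right fun τ => by
      rw [← Real.exp_nat_mul, ← Real.exp_nat_mul]
      congr 1
      push_cast
      ring).trans (exp_isBigO_discriminant.pow M)
  have hquot : (fun τ : ℍ => (g τ / η τ ^ (12 * M)) ^ 2) =O[atImInfty] fun _ => (1 : ℝ) ^ 2 := by
    refine ((hsq.mul (Asymptotics.isBigO_refl (fun τ : ℍ => (discriminant τ ^ M)⁻¹) _)).congr'
      (.of_forall fun τ => ?_) (.of_forall fun τ =>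
        mul_inv_cancel₀ (pow_ne_zero M (discriminant_ne_zero τ)))).trans
      (Asymptotics.isBigO_of_le _ fun _ => by simp)
    simp only [discriminant]
    rw [div_pow, ← pow_mul, ← pow_mul, ← div_eq_mul_inv]
    congr 2
    ring
  exact Asymptotics.IsBigO.of_pow two_ne_zero hquot

namespace IsSignModular

variable {w : ℤ} {g : ℂ → ℂ}

/-- The quotient of a form with the sign character by an odd power of `η ^ 12`, as a modular form
of level one; the assumption on `g` is the condition at the cusp. -/
def divEtaPow (hg : IsSignModular w g) {M : ℕ} (hM : Odd M)
    (hbd : IsBoundedAtImInfty fun τ : ℍ => g τ / η τ ^ (12 * M)) :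
    ModularForm 𝒮ℒ (w - 6 * M) where
  toFun τ := g τ / η τ ^ (12 * M)
  slash_action_eq' := by
    rintro _ ⟨A, rfl⟩
    exact SlashInvariantForm.slash_action_generators_SL2Z
      (hg.div_slash_S (isSignModular_eta_pow hM)) (hg.div_slash_T (isSignModular_eta_pow hM) _) A
  holo' := by
    rw [UpperHalfPlane.mdifferentiable_iff]
    refine (hg.differentiableOn.div (isSignModular_eta_pow hM).differentiableOn
      fun z hz => pow_ne_zero _ (eta_ne_zero hz)).congr fun z hz => ?_
    simp [ofComplex_apply_of_im_pos hz]
  bdd_at_cusps' hc := by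
    rw [Subgroup.IsArithmetic.isCusp_iff_isCusp_SL2Z] at hc
    rw [OnePoint.isBoundedAt_iff_forall_SL2Z hc]
    intro γ _
    rw [SlashInvariantForm.slash_action_generators_SL2Z
      (hg.div_slash_S (isSignModular_eta_pow hM)) (hg.div_slash_T (isSignModular_eta_pow hM) _)]
    exact hbd

lemma eq_zero_of_lineCoeff_eq_zero (hg : IsSignModular w g) {M : ℕ} (hM : Odd M)
    (h0 : ∀ n : ℤ, n < M → lineCoeff n 1 g = 0) (hw : w < 6 * M ∨ w = 6 * M + 2) {z : ℂ}
    (hz : 0 < z.im) : g z = 0 := by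
  obtain ⟨C, hC⟩ := exists_norm_le_exp_of_lineCoeff_eq_zero hg.differentiableOn
    (fun z hz => hg.map_add_two hz) M h0
  let f := hg.divEtaPow hM (isBoundedAtImInfty_div_eta_pow hC)
  have hf : f = 0 := by
    rcases hw with hw | hw
    · exact DFunLike.coe_injective (ModularFormClass.levelOne_neg_weight_eq_zero (by omega) f)
    · have hrank : Module.rank ℂ (ModularForm 𝒮ℒ (w - 6 * M)) = 0 := by
        rw [hw, add_sub_cancel_left]
        exact levelOne_weight_two_rank_zero
      exact rank_zero_iff_forall_zero.mp hrank f
  have hgz : g z / η z ^ (12 * M) = 0 := DFunLike.congr_fun hf (⟨z, hz⟩ : ℍ)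
  exact (div_eq_zero_iff.mp hgz).resolve_right (pow_ne_zero _ (eta_ne_zero (z := z) hz))

/-- Coefficients of even index vanish automatically, so this is the case `M = 3` of
`IsSignModular.eq_zero_of_lineCoeff_eq_zero`. -/
lemma eq_zero_of_lineCoeff_one_eq_zero (hg : IsSignModular w g) (hw : w < 18)
    (h0 : ∀ n : ℤ, n < 1 → lineCoeff n 1 g = 0) (h1 : lineCoeff 1 1 g = 0) {z : ℂ}
    (hz : 0 < z.im) : g z = 0 := by
  refine hg.eq_zero_of_lineCoeff_eq_zero (M := 3) (by decide) (fun n hn => ?_)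
    (.inl (by norm_num; exact hw)) hz
  obtain hn | rfl | rfl : n < 1 ∨ n = 1 ∨ n = 2 := by push_cast at hn; omega
  · exact h0 n hn
  · exact h1
  · exact lineCoeff_eq_zero_of_antiperiodic (fun x => hg.map_add_one _ (by simp)) even_two

end IsSignModular

/-- In weight below `18` a form in one variable with vanishing coefficients of index `< 1` is
determined by its first coefficient, so `g` is a product of a form in `a` and a form in `b`. -/
lemma eq_zero_of_isSignModular₂ {g : ℂ → ℂ → ℂ} {w₁ w₂ : ℤ} (hw₁ : w₁ < 18) (hw₂ : w₂ < 18)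
    (hg₁ : ∀ b : ℂ, 0 < b.im → IsSignModular w₁ fun a => g a b)
    (hg₂ : ∀ a : ℂ, 0 < a.im → IsSignModular w₂ fun b => g a b)
    (h0₁ : ∀ b : ℂ, 0 < b.im → ∀ n : ℤ, n < 1 → lineCoeff n 1 (fun a => g a b) = 0)
    (h0₂ : ∀ a : ℂ, 0 < a.im → ∀ n : ℤ, n < 1 → lineCoeff n 1 (fun b => g a b) = 0)
    (h11 : lineCoeff 1 1 (fun b => lineCoeff 1 1 (fun a => g a b)) = 0)
    {a b : ℂ} (ha : 0 < a.im) (hb : 0 < b.im) : g a b = 0 := by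
  set c : ℂ → ℂ := fun b => lineCoeff 1 1 (fun a => g a b)
  have hprop (b' : ℂ) (hb' : 0 < b'.im) : c b * g a b' = g a b * c b' := by
    have hcoeff (n : ℤ) : lineCoeff n 1 (fun a => c b * g a b' - c b' * g a b) =
        c b * lineCoeff n 1 (fun a => g a b') - c b' * lineCoeff n 1 (fun a => g a b) := by
      rw [lineCoeff_sub n 1 (f := fun a => c b * g a b') (g := fun a => c b' * g a b)
        (continuous_const.mul (continuous_line (hg₁ b' hb').differentiableOn one_pos))
        (continuous_const.mul (continuous_line (hg₁ b hb).differentiableOn one_pos))]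
      exact congrArg₂ (· - ·) (lineCoeff_const_smul n 1 _ _) (lineCoeff_const_smul n 1 _ _)
    have h := (((hg₁ b' hb').const_mul (c b)).sub
      ((hg₁ b hb).const_mul (c b'))).eq_zero_of_lineCoeff_one_eq_zero hw₁
      (fun n hn => by rw [hcoeff, h0₁ b' hb' n hn, h0₁ b hb n hn]; ring)
      (by rw [hcoeff]; ring) ha
    linear_combination h
  by_cases hcb : c b = 0
  · exact (hg₁ b hb).eq_zero_of_lineCoeff_one_eq_zero hw₁ (h0₁ b hb) hcb ha
  refine (hg₂ a ha).eq_zero_of_lineCoeff_one_eq_zero hw₂ (h0₂ a ha) ?_ hb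
  have h : c b • lineCoeff 1 1 (fun b' => g a b') = 0 := by
    rw [← lineCoeff_const_smul,
      lineCoeff_congr (g := fun b' => g a b • c b') fun x => hprop _ (by simp),
      lineCoeff_const_smul, h11, smul_zero]
  exact (smul_eq_zero_iff_right hcb).mp h

end SignModular

/-! ### The Siegel domain in coordinates and division by `z` -/

section ParametricDslope

variable {E : Type*} [NormedAddCommGroup E] [NormedSpace ℂ E]

lemma dslope_sub {f g : ℂ → E} {c : ℂ} (hf : DifferentiableAt ℂ f c) (hg : DifferentiableAt ℂ g c)
    (z : ℂ) : dslope (f - g) c z = dslope f c z - dslope g c z := by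
  rcases eq_or_ne z c with rfl | hz
  · simp only [dslope_same, deriv_sub hf hg]
  · simp only [dslope_of_ne _ hz, slope_def_module, Pi.sub_apply, ← smul_sub]
    congr 1
    abel

lemma norm_dslope_sub_dslope_le {f g : ℂ → E} {c : ℂ} {ρ δ : ℝ}
    (hf : DifferentiableOn ℂ f (Metric.ball c ρ)) (hg : DifferentiableOn ℂ g (Metric.ball c ρ))
    (h : ∀ w ∈ Metric.ball c ρ, dist (f w) (g w) ≤ δ) {z : ℂ} (hz : z ∈ Metric.ball c ρ) :
    dist (dslope f c z) (dslope g c z) ≤ 2 * δ / ρ := by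
  have hρ : 0 < ρ := Metric.pos_of_mem_ball hz
  have hc : Metric.ball c ρ ∈ 𝓝 c := Metric.ball_mem_nhds c hρ
  rw [dist_eq_norm, ← dslope_sub (hf.differentiableAt hc) (hg.differentiableAt hc)]
  refine Complex.norm_dslope_le_div_of_mapsTo_ball (hf.sub hg) (fun w hw => ?_) hz
  calc dist ((f - g) w) ((f - g) c) ≤ dist (f w) (f c + (g w - g c)) := by
        rw [dist_eq_norm, dist_eq_norm]
        exact le_of_eq (congrArg _ (by simp only [Pi.sub_apply]; abel))
    _ = ‖(f w - g w) - (f c - g c)‖ := by rw [dist_eq_norm]; congr 1; abel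
    _ ≤ δ + δ := (norm_sub_le _ _).trans <| add_le_add
        (dist_eq_norm (f w) (g w) ▸ h w hw) (dist_eq_norm (f c) (g c) ▸ h c (mem_of_mem_nhds hc))
    _ = 2 * δ := (two_mul δ).symm

variable {X : Type*} [TopologicalSpace X] {f : X → ℂ → E} {U : Set (X × ℂ)} {c : ℂ}

lemma continuousAt_uncurry_dslope_same (hU : IsOpen U)
    (hc : ContinuousOn (fun p : X × ℂ => f p.1 p.2) U)
    (hd : ∀ x, DifferentiableOn ℂ (f x) {z | (x, z) ∈ U}) {x₀ : X} (h : (x₀, c) ∈ U) :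
    ContinuousAt (fun p : X × ℂ => dslope (f p.1) c p.2) (x₀, c) := by
  obtain ⟨V, hV, W, hW, hVW⟩ := mem_nhds_prod_iff.mp (hU.mem_nhds h)
  obtain ⟨ρ, hρ, hρW⟩ := Metric.nhds_basis_closedBall.mem_iff.mp hW
  have hsub {x : X} (hx : x ∈ V) : Metric.closedBall c ρ ⊆ {z | (x, z) ∈ U} :=
    fun z hz => hVW ⟨hx, hρW hz⟩
  have hball {x : X} (hx : x ∈ V) : DifferentiableOn ℂ (f x) (Metric.ball c ρ) :=
    (hd x).mono (Metric.ball_subset_closedBall.trans (hsub hx))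
  have hx₀ := mem_of_mem_nhds hV
  rw [Metric.continuousAt_iff']
  intro ε hε
  obtain ⟨V', hV', hclose⟩ := (isCompact_closedBall c ρ).mem_uniformity_of_prod (f := f) (s := V)
    (hc.mono fun p hp => hsub hp.1 hp.2) hx₀
    (Metric.dist_mem_uniformity (show 0 < ε * ρ / 4 by positivity))
  rw [nhdsWithin_eq_nhds.mpr hV] at hV'
  have hbase : ∀ᶠ z in 𝓝 c, dist (dslope (f x₀) c z) (dslope (f x₀) c c) < ε / 2 :=
    Metric.continuousAt_iff'.mp (continuousAt_dslope_same.mpr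
      ((hball hx₀).differentiableAt (Metric.ball_mem_nhds c hρ))) _ (half_pos hε)
  rw [nhds_prod_eq]
  filter_upwards [prod_mem_prod (inter_mem hV hV')
    (inter_mem hbase (Metric.ball_mem_nhds c hρ))] with ⟨x, z⟩ ⟨⟨hx, hx'⟩, hzε, hz⟩
  calc dist (dslope (f x) c z) (dslope (f x₀) c c)
      ≤ dist (dslope (f x) c z) (dslope (f x₀) c z) +
        dist (dslope (f x₀) c z) (dslope (f x₀) c c) := dist_triangle _ _ _
    _ < 2 * (ε * ρ / 4) / ρ + ε / 2 := add_lt_add_of_le_of_lt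
        (norm_dslope_sub_dslope_le (hball hx) (hball hx₀)
          (fun w hw => (hclose x hx' w (Metric.ball_subset_closedBall hw)).le) hz) hzε
    _ = ε := by field_simp; ring

lemma continuousOn_uncurry_dslope (hU : IsOpen U)
    (hUc : ∀ p ∈ U, (p.1, c) ∈ U) (hc : ContinuousOn (fun p : X × ℂ => f p.1 p.2) U)
    (hd : ∀ x, DifferentiableOn ℂ (f x) {z | (x, z) ∈ U}) :
    ContinuousOn (fun p : X × ℂ => dslope (f p.1) c p.2) U := by
  rintro ⟨x, z⟩ hp
  rcases eq_or_ne z c with rfl | hz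
  · exact (continuousAt_uncurry_dslope_same hU hc hd hp).continuousWithinAt
  · have hslope : (fun p : X × ℂ => dslope (f p.1) c p.2) =ᶠ[𝓝[U] (x, z)]
        fun p => (p.2 - c)⁻¹ • (f p.1 p.2 - f p.1 c) := by
      filter_upwards [nhdsWithin_le_nhds (continuousAt_snd.eventually_ne hz)] with p hpc
      rw [dslope_of_ne _ hpc, slope_def_module]
    have hbase : ContinuousOn (fun p : X × ℂ => f p.1 c) U :=
      hc.comp (f := fun p : X × ℂ => (p.1, c)) (by fun_prop) hUc
    refine ContinuousWithinAt.congr_of_eventuallyEq ?_ hslope (hslope.eq_of_nhdsWithin hp)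
    have hinv : ContinuousWithinAt (fun p : X × ℂ => (p.2 - c)⁻¹) U (x, z) :=
      ContinuousWithinAt.inv₀ (by fun_prop) (sub_ne_zero.mpr hz)
    exact hinv.smul ((hc _ hp).sub (hbase _ hp))

lemma differentiableOn_dslope_param [CompleteSpace E] {f : ℂ → ℂ → E} {U : Set (ℂ × ℂ)}
    (hU : IsOpen U) (hUc : ∀ p ∈ U, (p.1, c) ∈ U)
    (hc : ContinuousOn (fun p : ℂ × ℂ => f p.1 p.2) U)
    (hd : ∀ x, DifferentiableOn ℂ (f x) {z | (x, z) ∈ U})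
    (hx : ∀ z, DifferentiableOn ℂ (fun x => f x z) {x | (x, z) ∈ U}) (z : ℂ) :
    DifferentiableOn ℂ (fun x => dslope (f x) c z) {x | (x, z) ∈ U} := by
  have hne {w : ℂ} (hw : w ≠ c) :
      DifferentiableOn ℂ (fun x => dslope (f x) c w) {x | (x, w) ∈ U} := by
    simp only [dslope_of_ne _ hw, slope_def_module]
    exact ((hx w).sub ((hx c).mono fun x hxw => hUc _ hxw)).const_smul _
  rcases eq_or_ne z c with rfl | hz
  · intro x₀ hx₀
    obtain ⟨V, hV, W, hW, hVW⟩ := mem_nhds_prod_iff.mp (hU.mem_nhds hx₀)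
    obtain ⟨V', hV', hVo, hxV⟩ := mem_nhds_iff.mp hV
    have hsub {x w : ℂ} (hxV : x ∈ V') (hw : w ∈ W) : (x, w) ∈ U := hVW ⟨hV' hxV, hw⟩
    have hlim : TendstoLocallyUniformlyOn (fun w x => dslope (f x) z w)
        (fun x => dslope (f x) z z) (𝓝[≠] z) V' := by
      rw [tendstoLocallyUniformlyOn_iff_forall_tendsto]
      intro x hxV
      have hcont := continuousAt_uncurry_dslope_same hU hc hd (hsub hxV (mem_of_mem_nhds hW))
      have hpair : Tendsto (fun y : ℂ × ℂ => (dslope (f y.2) z z, dslope (f y.2) z y.1))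
          (𝓝 (z, x)) (𝓝 (dslope (f x) z z, dslope (f x) z z)) :=
        .prodMk_nhds (hcont.tendsto.comp (g := fun p : ℂ × ℂ => dslope (f p.1) z p.2)
            (f := fun y : ℂ × ℂ => (y.2, z)) (Continuous.tendsto' (by fun_prop) _ _ rfl))
          (hcont.tendsto.comp (continuous_swap.tendsto' _ _ rfl))
      refine (hpair.mono_right (nhds_le_uniformity _)).mono_left ?_
      rw [nhds_prod_eq]
      exact Filter.prod_mono nhdsWithin_le_nhds nhdsWithin_le_nhds
    have hdiff : ∀ᶠ w in 𝓝[≠] z, DifferentiableOn ℂ (fun x => dslope (f x) z w) V' := by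
      filter_upwards [self_mem_nhdsWithin, nhdsWithin_le_nhds hW] with w hwz hw
      exact (hne hwz).mono fun x hxV => hsub hxV hw
    exact ((hlim.differentiableOn hdiff hVo).differentiableAt
      (hVo.mem_nhds hxV)).differentiableWithinAt
  · exact hne hz

end ParametricDslope

/-- The Siegel upper half space of degree `2` in the coordinates `(a, z, b)` of the symmetric matrix
with diagonal `a, b` and off-diagonal entry `z`. -/
def siegelDomain : Set (ℂ × ℂ × ℂ) := {p | 0 < p.1.im ∧ p.2.1.im ^ 2 < p.1.im * p.2.2.im}

section SiegelDomain

variable {a z b : ℂ}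

lemma mk_mem_siegelDomain : (a, z, b) ∈ siegelDomain ↔ 0 < a.im ∧ z.im ^ 2 < a.im * b.im :=
  Iff.rfl

lemma isOpen_siegelDomain : IsOpen siegelDomain := by
  simp only [siegelDomain, Set.ofPred_and]
  exact (isOpen_lt (by fun_prop) (by fun_prop)).inter (isOpen_lt (by fun_prop) (by fun_prop))

lemma siegelDomain_zero_iff : (a, 0, b) ∈ siegelDomain ↔ 0 < a.im ∧ 0 < b.im := by
  simp +contextual [mk_mem_siegelDomain]

lemma siegelDomain_zero_of_mem (h : (a, z, b) ∈ siegelDomain) : (a, 0, b) ∈ siegelDomain :=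
  siegelDomain_zero_iff.mpr ⟨h.1, pos_of_mul_pos_right ((sq_nonneg _).trans_lt h.2) h.1.le⟩

lemma siegelDomain_swap (h : (a, z, b) ∈ siegelDomain) : (b, z, a) ∈ siegelDomain :=
  ⟨(siegelDomain_zero_iff.mp (siegelDomain_zero_of_mem h)).2, by simpa [mul_comm] using h.2⟩

lemma line_mem_siegelDomain {y₁ y y₂ : ℝ} (h₁ : 0 < y₁) (h : y ^ 2 < y₁ * y₂) (x₁ x x₂ : ℝ) :
    ((x₁ + y₁ * I : ℂ), (x + y * I : ℂ), (x₂ + y₂ * I : ℂ)) ∈ siegelDomain := by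
  simp [mk_mem_siegelDomain, h₁, h]

lemma isPreconnected_siegelDomain_section (a b : ℂ) :
    IsPreconnected {z | (a, z, b) ∈ siegelDomain} := by
  have hconv : ConvexOn ℝ Set.univ fun z : ℂ => z.im ^ 2 := by
    simpa using! (even_two.convexOn_pow (𝕜 := ℝ)).comp_linearMap imCLM.toLinearMap
  by_cases ha : 0 < a.im
  · simpa [mk_mem_siegelDomain, ha] using (hconv.convex_lt (a.im * b.im)).isPreconnected
  · simpa [mk_mem_siegelDomain, ha] using isPreconnected_empty

end SiegelDomain

section Division

variable {E : Type*} [NormedAddCommGroup E] [NormedSpace ℂ E]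

/-- The regularity of functions on the Siegel domain that survives division by `z`: joint continuity
and holomorphy in each of the first two variables. -/
structure IsSiegelRegular (G : ℂ → ℂ → ℂ → E) : Prop where
  continuousOn : ContinuousOn (fun p : ℂ × ℂ × ℂ => G p.1 p.2.1 p.2.2) siegelDomain
  differentiableOn_fst : ∀ z b,
    DifferentiableOn ℂ (fun a => G a z b) {a | (a, z, b) ∈ siegelDomain}
  differentiableOn_snd : ∀ a b,
    DifferentiableOn ℂ (fun z => G a z b) {z | (a, z, b) ∈ siegelDomain}

/-- `G` is a regular quotient of `Φ` by `z ^ N` on the Siegel domain. -/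
structure IsPowQuotient (N : ℕ) (Φ G : ℂ → ℂ → ℂ → E) : Prop extends IsSiegelRegular G where
  eq_pow_smul : ∀ {a z b}, (a, z, b) ∈ siegelDomain → Φ a z b = z ^ N • G a z b

variable [CompleteSpace E]

lemma IsSiegelRegular.dslope {G : ℂ → ℂ → ℂ → E} (hG : IsSiegelRegular G) :
    IsSiegelRegular fun a z b => dslope (fun w => G a w b) 0 z where
  continuousOn := by
    have hU : IsOpen {p : (ℂ × ℂ) × ℂ | (p.1.1, p.2, p.1.2) ∈ siegelDomain} :=
      isOpen_siegelDomain.preimage (f := fun p : (ℂ × ℂ) × ℂ => (p.1.1, p.2, p.1.2)) (by fun_prop)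
    have hc : ContinuousOn (fun p : (ℂ × ℂ) × ℂ => G p.1.1 p.2 p.1.2)
        {p | (p.1.1, p.2, p.1.2) ∈ siegelDomain} :=
      hG.continuousOn.comp (f := fun p : (ℂ × ℂ) × ℂ => (p.1.1, p.2, p.1.2)) (by fun_prop)
        fun _ hp => hp
    exact (continuousOn_uncurry_dslope (f := fun x : ℂ × ℂ => fun w => G x.1 w x.2) hU
      (fun _ hp => siegelDomain_zero_of_mem hp) hc fun x => hG.differentiableOn_snd x.1 x.2).comp
      (f := fun p : ℂ × ℂ × ℂ => ((p.1, p.2.2), p.2.1)) (by fun_prop) fun _ hp => hp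
  differentiableOn_fst z b := by
    have hU : IsOpen {p : ℂ × ℂ | (p.1, p.2, b) ∈ siegelDomain} :=
      isOpen_siegelDomain.preimage (f := fun p : ℂ × ℂ => (p.1, p.2, b)) (by fun_prop)
    have hc : ContinuousOn (fun p : ℂ × ℂ => G p.1 p.2 b) {p | (p.1, p.2, b) ∈ siegelDomain} :=
      hG.continuousOn.comp (f := fun p : ℂ × ℂ => (p.1, p.2, b)) (by fun_prop) fun _ hp => hp
    exact differentiableOn_dslope_param hU (fun _ hp => siegelDomain_zero_of_mem hp) hc
      (fun a => hG.differentiableOn_snd a b) (fun w => hG.differentiableOn_fst w b) z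
  differentiableOn_snd a b z hz := by
    have h0 : {w | (a, w, b) ∈ siegelDomain} ∈ 𝓝 0 :=
      (isOpen_siegelDomain.preimage (f := fun w : ℂ => (a, w, b)) (by fun_prop)).mem_nhds
        (siegelDomain_zero_of_mem hz)
    exact (Complex.differentiableOn_dslope h0).mpr (hG.differentiableOn_snd a b) z hz

lemma IsPowQuotient.succ {N : ℕ} {Φ G : ℂ → ℂ → ℂ → E} (hG : IsPowQuotient N Φ G)
    (h0 : ∀ a b : ℂ, 0 < a.im → 0 < b.im → G a 0 b = 0) :
    IsPowQuotient (N + 1) Φ fun a z b => dslope (fun w => G a w b) 0 z where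
  toIsSiegelRegular := hG.toIsSiegelRegular.dslope
  eq_pow_smul {a z b} h := by
    obtain ⟨ha, hb⟩ := siegelDomain_zero_iff.mp (siegelDomain_zero_of_mem h)
    have hdiv := sub_smul_dslope_of_zero (f := fun w => G a w b) (h0 a b ha hb) z
    rw [hG.eq_pow_smul h, pow_succ, mul_smul, ← hdiv, sub_zero]

lemma IsSiegelRegular.eq_zero_of_forall_isPowQuotient {Φ : ℂ → ℂ → ℂ → E} (hΦ : IsSiegelRegular Φ)
    (h : ∀ N G, IsPowQuotient N Φ G → ∀ a b : ℂ, 0 < a.im → 0 < b.im → G a 0 b = 0)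
    {a z b : ℂ} (hp : (a, z, b) ∈ siegelDomain) : Φ a z b = 0 := by
  have hquot (N : ℕ) : ∃ G, IsPowQuotient N Φ G := by
    induction N with
    | zero => exact ⟨Φ, hΦ, by simp⟩
    | succ N ih => exact ih.elim fun G hG => ⟨_, hG.succ (h N G hG)⟩
  have hopen : IsOpen {z | (a, z, b) ∈ siegelDomain} :=
    isOpen_siegelDomain.preimage (f := fun w : ℂ => (a, w, b)) (by fun_prop)
  have h0 := siegelDomain_zero_of_mem hp
  have han := (hΦ.differentiableOn_snd a b).analyticOnNhd hopen
  have horder : analyticOrderAt (fun z => Φ a z b) 0 = ⊤ := by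
    refine ENat.eq_top_iff_forall_ge.mpr fun N => (natCast_le_analyticOrderAt (han 0 h0)).mpr ?_
    obtain ⟨G, hG⟩ := hquot N
    refine ⟨fun z => G a z b, (hG.differentiableOn_snd a b).analyticOnNhd hopen 0 h0, ?_⟩
    filter_upwards [hopen.mem_nhds h0] with w hw
    rw [sub_zero, hG.eq_pow_smul hw]
  exact han.eqOn_zero_of_preconnected_of_eventuallyEq_zero (isPreconnected_siegelDomain_section a b)
    h0 (analyticOrderAt_eq_top.mp horder) hp

end Division

/-! ### Fourier coefficients on the Siegel domain and the Koecher principle -/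

section SiegelCoeff

variable {E : Type*} [NormedAddCommGroup E] [NormedSpace ℂ E] {Φ Ψ : ℂ → ℂ → ℂ → E}
  {y₁ y y₂ : ℝ}

/-- The Fourier coefficient of `Φ` at `exp (π i (n a + r z + m b))`, computed on the lines of
heights `y₁`, `y`, `y₂` in the variables `a`, `z`, `b`. -/
def siegelCoeff (y₁ y y₂ : ℝ) (Φ : ℂ → ℂ → ℂ → E) (n r m : ℤ) : E :=
  lineCoeff m y₂ fun b => lineCoeff r y fun z => lineCoeff n y₁ fun a => Φ a z b

lemma siegelCoeff_congr (h₁ : 0 < y₁) (h : y ^ 2 < y₁ * y₂)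
    (hΦΨ : ∀ a z b, (a, z, b) ∈ siegelDomain → Φ a z b = Ψ a z b) (n r m : ℤ) :
    siegelCoeff y₁ y y₂ Φ n r m = siegelCoeff y₁ y y₂ Ψ n r m :=
  lineCoeff_congr fun _ => lineCoeff_congr fun _ => lineCoeff_congr fun _ =>
    hΦΨ _ _ _ (line_mem_siegelDomain h₁ h _ _ _)

namespace IsSiegelRegular

variable (hΦ : IsSiegelRegular Φ) (h₁ : 0 < y₁) (h : y ^ 2 < y₁ * y₂)
include hΦ h₁ h

lemma continuous_comp_line {X : Type*} [TopologicalSpace X] {u v w : X → ℝ} (hu : Continuous u)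
    (hv : Continuous v) (hw : Continuous w) :
    Continuous fun p : X => Φ (u p + y₁ * I) (v p + y * I) (w p + y₂ * I) :=
  hΦ.continuousOn.comp_continuous
    (f := fun p : X => ((u p + y₁ * I : ℂ), (v p + y * I : ℂ), (w p + y₂ * I : ℂ)))
    (by fun_prop) fun _ => line_mem_siegelDomain h₁ h _ _ _

lemma continuous_lineCoeff_fst (n : ℤ) {X : Type*} [TopologicalSpace X] {v w : X → ℝ}
    (hv : Continuous v) (hw : Continuous w) :
    Continuous fun p : X => lineCoeff n y₁ fun a => Φ a (v p + y * I) (w p + y₂ * I) :=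
  continuous_lineCoeff n <| hΦ.continuous_comp_line h₁ h (X := X × ℝ) continuous_snd
    (hv.comp continuous_fst) (hw.comp continuous_fst)

lemma siegelCoeff_eq_baz (n r m : ℤ) :
    siegelCoeff y₁ y y₂ Φ n r m =
      lineCoeff m y₂ fun b => lineCoeff n y₁ fun a => lineCoeff r y fun z => Φ a z b :=
  lineCoeff_congr fun _ => lineCoeff_comm r n <|
    hΦ.continuous_comp_line h₁ h continuous_snd continuous_fst continuous_const

lemma siegelCoeff_eq_zba (n r m : ℤ) :
    siegelCoeff y₁ y y₂ Φ n r m =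
      lineCoeff r y fun z => lineCoeff m y₂ fun b => lineCoeff n y₁ fun a => Φ a z b :=
  lineCoeff_comm m r <| hΦ.continuous_lineCoeff_fst h₁ h n continuous_snd continuous_fst

lemma siegelCoeff_eq_azb (n r m : ℤ) :
    siegelCoeff y₁ y y₂ Φ n r m =
      lineCoeff n y₁ fun a => lineCoeff r y fun z => lineCoeff m y₂ fun b => Φ a z b := by
  calc siegelCoeff y₁ y y₂ Φ n r m
      = lineCoeff r y fun z => lineCoeff n y₁ fun a => lineCoeff m y₂ fun b => Φ a z b :=
        (hΦ.siegelCoeff_eq_zba h₁ h n r m).trans <| lineCoeff_congr fun _ => lineCoeff_comm m n <|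
          hΦ.continuous_comp_line h₁ h continuous_snd continuous_const continuous_fst
    _ = _ := lineCoeff_comm r n <| continuous_lineCoeff m <|
          hΦ.continuous_comp_line h₁ h (X := (ℝ × ℝ) × ℝ) (by fun_prop) (by fun_prop) (by fun_prop)

lemma siegelCoeff_clm_comp [CompleteSpace E] {F : Type*} [NormedAddCommGroup F] [NormedSpace ℂ F]
    [CompleteSpace F] (L : E →L[ℂ] F) (n r m : ℤ) :
    siegelCoeff y₁ y y₂ (fun a z b => L (Φ a z b)) n r m = L (siegelCoeff y₁ y y₂ Φ n r m) := by
  rw [siegelCoeff, siegelCoeff, ← lineCoeff_clm_comp L m y₂ <| continuous_lineCoeff r <|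
    hΦ.continuous_lineCoeff_fst h₁ h n continuous_snd continuous_fst]
  refine lineCoeff_congr fun _ => ?_
  rw [← lineCoeff_clm_comp L r y <|
    hΦ.continuous_lineCoeff_fst h₁ h n continuous_id continuous_const]
  exact lineCoeff_congr fun _ => lineCoeff_clm_comp L n y₁ <|
    hΦ.continuous_comp_line h₁ h continuous_id continuous_const continuous_const

end IsSiegelRegular

end SiegelCoeff

section ParabolicForm

variable {E : Type*} [NormedAddCommGroup E] [NormedSpace ℂ E]

/-- The transformation laws of a vector-valued Siegel modular form with sign character under the
Siegel parabolic subgroup, in the coordinates `(a, z, b)`. The operators `L`, `R`, `S` are the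
action on values of the shear, of the exchange of `a` and `b`, and of the sign change of `z`. -/
structure IsParabolicForm (L R S : E →L[ℂ] E) (Φ : ℂ → ℂ → ℂ → E) : Prop
    extends IsSiegelRegular Φ where
  map_add_one_fst : ∀ {a z b}, (a, z, b) ∈ siegelDomain → Φ (a + 1) z b = -Φ a z b
  map_add_one_snd : ∀ {a z b}, (a, z, b) ∈ siegelDomain → Φ a (z + 1) b = -Φ a z b
  map_shear : ∀ {a z b}, (a, z, b) ∈ siegelDomain →
    Φ (a + (2 * z + b)) (z + b) b = -L (Φ a z b)
  map_swap : ∀ {a z b}, (a, z, b) ∈ siegelDomain → Φ b z a = R (Φ a z b)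
  map_neg : ∀ {a z b}, (a, z, b) ∈ siegelDomain → Φ a (-z) b = S (Φ a z b)

namespace IsParabolicForm

variable {L R S : E →L[ℂ] E} {Φ : ℂ → ℂ → ℂ → E} (hΦ : IsParabolicForm L R S Φ)
include hΦ

lemma map_add_two_fst {a z b : ℂ} (h : (a, z, b) ∈ siegelDomain) : Φ (a + 2) z b = Φ a z b := by
  have h' : (a + 1, z, b) ∈ siegelDomain := by simpa [mk_mem_siegelDomain] using h
  rw [show a + 2 = a + 1 + 1 by ring, hΦ.map_add_one_fst h', hΦ.map_add_one_fst h, neg_neg]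

lemma map_add_two_snd {a z b : ℂ} (h : (a, z, b) ∈ siegelDomain) : Φ a (z + 2) b = Φ a z b := by
  have h' : (a, z + 1, b) ∈ siegelDomain := by simpa [mk_mem_siegelDomain] using h
  rw [show z + 2 = z + 1 + 1 by ring, hΦ.map_add_one_snd h', hΦ.map_add_one_snd h, neg_neg]

lemma siegelCoeff_eq_zero_of_even_fst {n : ℤ} (hn : Even n) (r m : ℤ) :
    siegelCoeff 1 0 1 Φ n r m = 0 := by
  refine (lineCoeff_congr fun xb => ?_).trans (lineCoeff_zero m 1)
  refine (lineCoeff_congr fun xz => ?_).trans (lineCoeff_zero r 0)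
  exact lineCoeff_eq_zero_of_antiperiodic
    (fun x => hΦ.map_add_one_fst (line_mem_siegelDomain one_pos (by norm_num) _ _ _)) hn

lemma siegelCoeff_eq_zero_of_even_snd (n : ℤ) {r : ℤ} (hr : Even r) (m : ℤ) :
    siegelCoeff 1 0 1 Φ n r m = 0 := by
  refine (lineCoeff_congr fun xb => ?_).trans (lineCoeff_zero m 1)
  refine lineCoeff_eq_zero_of_antiperiodic (fun x => ?_) hr
  rw [← lineCoeff_neg]
  exact lineCoeff_congr fun t =>
    hΦ.map_add_one_snd (line_mem_siegelDomain one_pos (by norm_num) _ _ _)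

section Height

variable {y₁ y y₂ : ℝ} (h₁ : 0 < y₁) (h : y ^ 2 < y₁ * y₂)
include h₁ h

lemma siegelCoeff_height_fst {y₁' : ℝ} (h₁' : 0 < y₁') (h' : y ^ 2 < y₁' * y₂) (n r m : ℤ) :
    siegelCoeff y₁ y y₂ Φ n r m = siegelCoeff y₁' y y₂ Φ n r m := by
  have h₂ : 0 < y₂ := pos_of_mul_pos_right ((sq_nonneg _).trans_lt h) h₁.le
  refine lineCoeff_congr fun xb => lineCoeff_congr fun xz => ?_
  have hmem (a : ℂ) (ha : a.im ∈ Set.uIcc y₁ y₁') :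
      (a, (xz + y * I : ℂ), (xb + y₂ * I : ℂ)) ∈ siegelDomain := by
    have hmin : y ^ 2 < min y₁ y₁' * y₂ := by
      rcases min_choice y₁ y₁' with hm | hm <;> rwa [hm]
    have hy : y ^ 2 < a.im * y₂ := hmin.trans_le (mul_le_mul_of_nonneg_right ha.1 h₂.le)
    simpa [mk_mem_siegelDomain, hy] using (lt_min h₁ h₁').trans_le ha.1
  exact lineCoeff_eq_of_differentiableOn n (fun a ha => hΦ.map_add_two_fst (hmem a ha))
    ((hΦ.differentiableOn_fst _ _).mono hmem)

lemma siegelCoeff_height_snd (n r m : ℤ) :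
    siegelCoeff y₁ y y₂ Φ n r m = siegelCoeff y₁ 0 y₂ Φ n r m := by
  have h₀ : (0 : ℝ) ^ 2 < y₁ * y₂ := by nlinarith [sq_nonneg y]
  rw [hΦ.siegelCoeff_eq_baz h₁ h, hΦ.siegelCoeff_eq_baz h₁ h₀]
  refine lineCoeff_congr fun xb => lineCoeff_congr fun xa => ?_
  have hmem (z : ℂ) (hz : z.im ∈ Set.uIcc y 0) :
      ((xa + y₁ * I : ℂ), z, (xb + y₂ * I : ℂ)) ∈ siegelDomain := by
    have hzy : |z.im| ≤ |y| := by simpa using Set.abs_sub_right_of_mem_uIcc hz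
    simpa [mk_mem_siegelDomain, h₁] using (sq_le_sq.mpr hzy).trans_lt h
  exact lineCoeff_eq_of_differentiableOn r (fun z hz => hΦ.map_add_two_snd (hmem z hz))
    ((hΦ.differentiableOn_snd _ _).mono hmem)

variable [CompleteSpace E]

lemma siegelCoeff_swap (n r m : ℤ) :
    siegelCoeff y₁ y y₂ Φ n r m = R (siegelCoeff y₂ y y₁ Φ m r n) := by
  have h₂ : 0 < y₂ := pos_of_mul_pos_right ((sq_nonneg _).trans_lt h) h₁.le
  have h' : y ^ 2 < y₂ * y₁ := by rwa [mul_comm]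
  rw [← hΦ.siegelCoeff_clm_comp h₂ h', hΦ.siegelCoeff_eq_azb h₁ h]
  exact lineCoeff_congr fun _ => lineCoeff_congr fun _ => lineCoeff_congr fun _ =>
    hΦ.map_swap (line_mem_siegelDomain h₂ h' _ _ _)

lemma siegelCoeff_height (n r m : ℤ) :
    siegelCoeff y₁ y y₂ Φ n r m = siegelCoeff 1 0 1 Φ n r m := by
  have h₂ : 0 < y₂ := pos_of_mul_pos_right ((sq_nonneg _).trans_lt h) h₁.le
  have h₀ {s t : ℝ} (hs : 0 < s) (ht : 0 < t) : (0 : ℝ) ^ 2 < s * t := by simp [hs, ht]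
  rw [hΦ.siegelCoeff_height_snd h₁ h,
    hΦ.siegelCoeff_height_fst h₁ (h₀ h₁ h₂) one_pos (h₀ one_pos h₂),
    hΦ.siegelCoeff_swap one_pos (h₀ one_pos h₂),
    hΦ.siegelCoeff_height_fst h₂ (h₀ h₂ one_pos) one_pos (h₀ one_pos one_pos),
    ← hΦ.siegelCoeff_swap one_pos (h₀ one_pos one_pos)]

end Height

lemma siegelCoeff_neg_snd [CompleteSpace E] (n r m : ℤ) :
    siegelCoeff 1 0 1 Φ n (-r) m = S (siegelCoeff 1 0 1 Φ n r m) := by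
  have h : (0 : ℝ) ^ 2 < 1 * 1 := by norm_num
  rw [← hΦ.siegelCoeff_clm_comp one_pos h, ← siegelCoeff_congr one_pos h
    (Φ := fun a z b => Φ a (-z) b) (fun a z b h => hΦ.map_neg h)]
  refine lineCoeff_congr fun xb => ?_
  have hneg := lineCoeff_comp_neg r 0 (fun z => lineCoeff n 1 fun a => Φ a z (xb + (1 : ℝ) * I))
    fun x => lineCoeff_congr fun t =>
      hΦ.map_add_two_snd (line_mem_siegelDomain one_pos (by norm_num) _ _ _)
  simpa using hneg.symm

/-- The shear is a translation in each variable, at the cost of raising the heights from `(1, 0, 1)`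
to `(2, 1, 1)`. -/
lemma siegelCoeff_comp_shear (n r m : ℤ) :
    siegelCoeff 1 0 1 (fun a z b => Φ (a + (2 * z + b)) (z + b) b) n r m =
      siegelCoeff 2 1 1 Φ n (r - 2 * n) (m - r + n) := by
  have hfst (b z : ℂ) (hb : b.im = 1) (hz : z.im = 0) :
      lineCoeff n 1 (fun a => Φ (a + (2 * z + b)) (z + b) b) =
        cexp (Real.pi * I * n * (2 * z + b)) • lineCoeff n 2 (fun a => Φ a (z + b) b) := by
    refine lineCoeff_comp_add_const n _ (fun a => Φ a (z + b) b) ?_ fun x => ?_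
    · simp [hb, hz, one_add_one_eq_two]
    · exact hΦ.map_add_two_fst (by simp [mk_mem_siegelDomain, hb, hz])
  have hsnd (b : ℂ) (hb : b.im = 1) :
      lineCoeff r 0 (fun z => lineCoeff n 1 fun a => Φ (a + (2 * z + b)) (z + b) b) =
        cexp (Real.pi * I * (r - n : ℤ) * b) •
          lineCoeff (r - 2 * n) 1 (fun z => lineCoeff n 2 fun a => Φ a z b) := by
    set g : ℂ → E := fun z => lineCoeff n 2 fun a => Φ a z b
    have hper (x : ℝ) : g (x + (1 : ℝ) * I + 2) = g (x + (1 : ℝ) * I) := lineCoeff_congr fun t =>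
      hΦ.map_add_two_snd (by simp [mk_mem_siegelDomain, hb])
    calc _ = lineCoeff r 0 (fun z => cexp (Real.pi * I * n * b) •
          (cexp (Real.pi * I * (2 * n : ℤ) * z) • g (z + b))) := lineCoeff_congr fun x => by
            rw [hfst b _ hb (by simp), smul_smul, ← Complex.exp_add]
            congr 2
            push_cast
            ring
      _ = _ := by
        rw [lineCoeff_const_smul, lineCoeff_exp_smul r (2 * n) 0 fun z => g (z + b),
          lineCoeff_comp_add_const _ b g (by simpa using hb) hper, smul_smul, ← Complex.exp_add]
        congr 2
        push_cast
        ring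
  rw [siegelCoeff, siegelCoeff, sub_add, ← lineCoeff_exp_smul]
  exact lineCoeff_congr fun x => hsnd _ (by simp)

variable [CompleteSpace E]

lemma siegelCoeff_shear (n r m : ℤ) :
    siegelCoeff 1 0 1 Φ n (r - 2 * n) (m - r + n) = -L (siegelCoeff 1 0 1 Φ n r m) := by
  have h : (0 : ℝ) ^ 2 < 1 * 1 := by norm_num
  rw [← hΦ.siegelCoeff_height two_pos (y := 1) (y₂ := 1) (by norm_num),
    ← hΦ.siegelCoeff_comp_shear, siegelCoeff_congr one_pos h
      (Ψ := fun a z b => (-L) (Φ a z b)) (fun a z b hp => by simpa using hΦ.map_shear hp)]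
  exact hΦ.siegelCoeff_clm_comp one_pos h (-L) n r m

lemma norm_siegelCoeff_le_shear_iterate (n r m : ℤ) (k : ℕ) :
    ‖siegelCoeff 1 0 1 Φ n r m‖ ≤
      ‖L‖ ^ k * ‖siegelCoeff 1 0 1 Φ n (r + 2 * k * n) (m + k * r + k ^ 2 * n)‖ := by
  induction k with
  | zero => simp
  | succ k ih =>
    have hstep := hΦ.siegelCoeff_shear n (r + 2 * (k + 1) * n) (m + (k + 1) * r + (k + 1) ^ 2 * n)
    rw [show r + 2 * (k + 1) * n - 2 * n = r + 2 * k * n by ring,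
      show m + (k + 1) * r + (k + 1) ^ 2 * n - (r + 2 * (k + 1) * n) + n
        = m + k * r + k ^ 2 * n by ring] at hstep
    rw [hstep, norm_neg] at ih
    push_cast
    rw [pow_succ ‖L‖ k, mul_assoc (‖L‖ ^ k)]
    exact ih.trans (mul_le_mul_of_nonneg_left (L.le_opNorm _) (by positivity))

omit [CompleteSpace E] in
lemma exists_norm_siegelCoeff_le :
    ∃ C, ∀ n r m : ℤ, ‖siegelCoeff 1 0 1 Φ n r m‖ ≤ Real.exp (Real.pi * (n + m)) * C := by
  have hcont : Continuous fun p : ℝ × ℝ × ℝ =>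
      Φ (p.1 + (1 : ℝ) * I) (p.2.1 + (0 : ℝ) * I) (p.2.2 + (1 : ℝ) * I) :=
    hΦ.continuous_comp_line one_pos (by norm_num) (by fun_prop) (by fun_prop) (by fun_prop)
  have hK := isCompact_Icc (a := (0 : ℝ)) (b := 2)
  obtain ⟨C, hC⟩ := (hK.prod (hK.prod hK)).exists_bound_of_continuousOn hcont.continuousOn
  refine ⟨C, fun n r m => ?_⟩
  refine (norm_lineCoeff_le m (f := fun b => lineCoeff r 0 fun z => lineCoeff n 1 fun a => Φ a z b)
    fun xb hb => norm_lineCoeff_le r fun xz hz => norm_lineCoeff_le n fun xa ha =>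
      hC (xa, xz, xb) ⟨ha, hz, hb⟩).trans (le_of_eq ?_)
  rw [← mul_assoc, ← mul_assoc, ← Real.exp_add, ← Real.exp_add]
  congr 2
  ring

/-- The Koecher principle: iterating the shear `k` times, the last index becomes `-k²|n|` to leading
order, so the coefficient is `O(exp(-π k² |n| + O(k)))` for every `k`. -/
lemma siegelCoeff_eq_zero_of_neg_fst {n : ℤ} (hn : n < 0) (r m : ℤ) :
    siegelCoeff 1 0 1 Φ n r m = 0 := by
  obtain ⟨C, hC⟩ := hΦ.exists_norm_siegelCoeff_le
  have hC0 : 0 ≤ C := by simpa using (norm_nonneg _).trans (hC 0 0 0)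
  have hn' : (n : ℝ) ≤ -1 := by exact_mod_cast Int.le_sub_one_of_lt hn
  have hbound (k : ℕ) : ‖siegelCoeff 1 0 1 Φ n r m‖ ≤
      C * Real.exp (Real.pi * (n + m) + k * ((‖L‖ + Real.pi * r) + -Real.pi * k)) := by
    have hL : ‖L‖ ^ k ≤ Real.exp (k * ‖L‖) := by
      rw [Real.exp_nat_mul]
      exact pow_le_pow_left₀ (norm_nonneg _) (by linarith [Real.add_one_le_exp ‖L‖]) _
    refine (hΦ.norm_siegelCoeff_le_shear_iterate n r m k).trans <|
      (mul_le_mul hL (hC _ _ _) (norm_nonneg _) (Real.exp_pos _).le).trans ?_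
    rw [← mul_assoc, mul_comm C, ← Real.exp_add]
    refine mul_le_mul_of_nonneg_right (Real.exp_le_exp.mpr ?_) hC0
    push_cast
    have : Real.pi * (k : ℝ) ^ 2 * n ≤ Real.pi * (k : ℝ) ^ 2 * (-1) :=
      mul_le_mul_of_nonneg_left hn' (by positivity)
    linarith
  have hexponent : Tendsto (fun k : ℕ => Real.pi * (n + m) +
      k * ((‖L‖ + Real.pi * r) + -Real.pi * k)) atTop atBot :=
    tendsto_atBot_add_const_left _ _ <| tendsto_natCast_atTop_atTop.atTop_mul_atBot₀ <|
      tendsto_atBot_add_const_left _ _ <|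
        tendsto_natCast_atTop_atTop.const_mul_atTop_of_neg (neg_neg_of_pos Real.pi_pos)
  have hlim := (Real.tendsto_exp_atBot.comp hexponent).const_mul C
  rw [mul_zero] at hlim
  exact norm_le_zero_iff.mp (ge_of_tendsto' hlim hbound)

lemma siegelCoeff_eq_zero_of_neg_trd (n r : ℤ) {m : ℤ} (hm : m < 0) :
    siegelCoeff 1 0 1 Φ n r m = 0 := by
  rw [hΦ.siegelCoeff_swap one_pos (by norm_num), hΦ.siegelCoeff_eq_zero_of_neg_fst hm, map_zero]

end IsParabolicForm

end ParabolicForm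

/-! ### Taylor coefficients along the diagonal -/

lemma eq_of_eventually_pow_smul_eq {𝕜 E : Type*} [NontriviallyNormedField 𝕜]
    [NormedAddCommGroup E] [NormedSpace 𝕜 E] {f h : 𝕜 → E} {N : ℕ} (hf : ContinuousAt f 0)
    (hh : ContinuousAt h 0) (hfh : ∀ᶠ z in 𝓝 0, z ^ N • f z = z ^ N • h z) : f 0 = h 0 := by
  refine tendsto_nhds_unique ((hf.tendsto.mono_left nhdsWithin_le_nhds).congr' ?_)
    (hh.tendsto.mono_left (nhdsWithin_le_nhds (s := {0}ᶜ)))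
  filter_upwards [nhdsWithin_le_nhds hfh, self_mem_nhdsWithin] with z hz hz0
  exact smul_right_injective _ (pow_ne_zero N hz0) hz

lemma eq_zero_of_eval_exp_eq_pow_smul {P : Polynomial ℂ} {N : ℕ} {h : ℝ → ℂ}
    (hP : P.natDegree < N) (hh : ContinuousAt h 0)
    (hPh : ∀ x : ℝ, P.eval (cexp (2 * Real.pi * I * x)) = x ^ N • h x) : P = 0 := by
  by_contra hP0
  obtain ⟨Q, hQ, hQ1⟩ := Polynomial.exists_eq_pow_rootMultiplicity_mul_and_not_dvd P hP0 1
  set K := P.rootMultiplicity 1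
  have hK : K < N := (Polynomial.count_roots P (a := 1) ▸ (Multiset.count_le_card _ _).trans
    (Polynomial.card_roots' P)).trans_lt hP
  set e : ℝ → ℂ := fun x => cexp (2 * Real.pi * I * x)
  have he : HasDerivAt e (2 * Real.pi * I) 0 := by
    simpa [e] using ((hasDerivAt_id (0 : ℝ)).ofReal_comp.const_mul (2 * Real.pi * I : ℂ)).cexp
  have hlim : dslope e 0 0 ^ K * Q.eval (e 0) = (0 : ℝ) ^ (N - K) • h 0 := by
    refine eq_of_eventually_pow_smul_eq (N := K) (f := fun x => dslope e 0 x ^ K * Q.eval (e x))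
      (h := fun x => x ^ (N - K) • h x)
      (((continuousAt_dslope_same.mpr he.differentiableAt).pow K).mul
        (Q.continuous.continuousAt.comp he.continuousAt))
      ((continuous_pow _).continuousAt.smul hh) (.of_forall fun x => ?_)
    have hx : e x - 1 = x • dslope e 0 x := by
      simpa [e] using (sub_smul_dslope e 0 x).symm
    have hPx : (e x - 1) ^ K * Q.eval (e x) = x ^ N • h x := by
      rw [← hPh, hQ]
      simp [e]
    rw [smul_smul, ← pow_add, Nat.add_sub_cancel' hK.le, ← hPx, hx, smul_pow, smul_mul_assoc]
  rw [zero_pow (Nat.sub_ne_zero_of_lt hK), zero_smul, dslope_same, he.deriv] at hlim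
  refine mul_ne_zero (pow_ne_zero K (by simp [Real.pi_ne_zero])) (fun h0 => hQ1 ?_) hlim
  exact Polynomial.dvd_iff_isRoot.mpr (by simpa [e] using h0)

/-- A trigonometric polynomial with `n + 1` consecutive frequencies has at most `n` zeros per
period. -/
lemma eq_zero_of_lineCoeff_support {f : ℂ → ℂ} {h : ℝ → ℂ} {n N : ℕ} (hn : n < N)
    (hc : Continuous fun x : ℝ => f (x + (0 : ℝ) * I))
    (hp : ∀ x : ℝ, f (x + (0 : ℝ) * I + 2) = f (x + (0 : ℝ) * I))
    (hs : ∀ r : ℤ, (∀ k ≤ n, r ≠ 2 * k - n) → lineCoeff r 0 f = 0) (hh : ContinuousAt h 0)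
    (hf : ∀ x : ℝ, f (x + (0 : ℝ) * I) = x ^ N • h x) (x : ℝ) : f (x + (0 : ℝ) * I) = 0 := by
  set P : Polynomial ℂ := ∑ k ∈ Finset.range (n + 1),
    Polynomial.monomial k (lineCoeff (2 * k - n) 0 f) with hPdef
  have heval (x : ℝ) : P.eval (cexp (2 * Real.pi * I * x)) =
      cexp (Real.pi * I * n * x) * f (x + (0 : ℝ) * I) := by
    rw [eq_sum_lineCoeff hc hp ((Finset.range (n + 1)).image fun k : ℕ => (2 * k - n : ℤ))
      (fun r hr => hs r fun k hk h => hr (Finset.mem_image.mpr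
        ⟨k, Finset.mem_range_succ_iff.mpr hk, h.symm⟩)) x,
      Finset.sum_image fun k _ l _ hkl => by simpa using hkl, Finset.mul_sum, hPdef,
      Polynomial.eval_finsetSum]
    refine Finset.sum_congr rfl fun k _ => ?_
    rw [Polynomial.eval_monomial, mul_left_comm, ← Complex.exp_add, ← Complex.exp_nat_mul]
    congr 2
    push_cast
    ring
  have hP0 : P = 0 := by
    refine eq_zero_of_eval_exp_eq_pow_smul (h := fun x => cexp (Real.pi * I * n * x) * h x)
      ((Polynomial.natDegree_sum_le_of_forall_le _ _ fun k hk =>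
        (Polynomial.natDegree_monomial_le _).trans (Finset.mem_range_succ_iff.mp hk)).trans_lt hn)
      (.mul (by fun_prop) hh) fun x => ?_
    rw [heval, hf, mul_smul_comm]
  simpa [hP0] using (heval x).symm

section PartialCoeff

variable {E : Type*} [NormedAddCommGroup E] [NormedSpace ℂ E] {Φ G : ℂ → ℂ → ℂ → E}
  {y₁ y y₂ : ℝ} {N : ℕ}

/-- The Fourier coefficient of `Φ` at `exp (π i (n a + m b))`, as a function of `z`. -/
def partialCoeff (y₁ y₂ : ℝ) (Φ : ℂ → ℂ → ℂ → E) (n m : ℤ) (z : ℂ) : E :=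
  lineCoeff m y₂ fun b => lineCoeff n y₁ fun a => Φ a z b

lemma IsSiegelRegular.continuous_partialCoeff (hΦ : IsSiegelRegular Φ) (h₁ : 0 < y₁)
    (h : y ^ 2 < y₁ * y₂) (n m : ℤ) :
    Continuous fun x : ℝ => partialCoeff y₁ y₂ Φ n m (x + y * I) :=
  continuous_lineCoeff m <| hΦ.continuous_lineCoeff_fst h₁ h n continuous_fst continuous_snd

lemma IsSiegelRegular.partialCoeff_clm_comp [CompleteSpace E] {F : Type*} [NormedAddCommGroup F]
    [NormedSpace ℂ F] [CompleteSpace F] (hΦ : IsSiegelRegular Φ) (h₁ : 0 < y₁)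
    (h : y ^ 2 < y₁ * y₂) (L : E →L[ℂ] F) (n m : ℤ) (x : ℝ) :
    partialCoeff y₁ y₂ (fun a z b => L (Φ a z b)) n m (x + y * I) =
      L (partialCoeff y₁ y₂ Φ n m (x + y * I)) := by
  rw [partialCoeff, partialCoeff, ← lineCoeff_clm_comp L m y₂ <|
    hΦ.continuous_lineCoeff_fst h₁ h n continuous_const continuous_id]
  exact lineCoeff_congr fun _ => lineCoeff_clm_comp L n y₁ <|
    hΦ.continuous_comp_line h₁ h continuous_id continuous_const continuous_const

lemma IsPowQuotient.partialCoeff_eq (hG : IsPowQuotient N Φ G) (h₁ : 0 < y₁) (n m : ℤ) {z : ℂ}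
    (hz : z.im ^ 2 < y₁ * y₂) :
    partialCoeff y₁ y₂ Φ n m z = z ^ N • partialCoeff y₁ y₂ G n m z := by
  rw [partialCoeff, partialCoeff, ← lineCoeff_const_smul]
  refine lineCoeff_congr fun _ => ?_
  rw [← lineCoeff_const_smul]
  exact lineCoeff_congr fun _ => hG.eq_pow_smul (by simpa [mk_mem_siegelDomain, h₁] using hz)

lemma IsPowQuotient.partialCoeff_ofReal (hG : IsPowQuotient N Φ G) (h₁ : 0 < y₁) (h₂ : 0 < y₂)
    (n m : ℤ) (x : ℝ) : partialCoeff y₁ y₂ Φ n m (x + (0 : ℝ) * I) =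
      x ^ N • partialCoeff y₁ y₂ G n m (x + (0 : ℝ) * I) := by
  rw [hG.partialCoeff_eq h₁ n m (by simp [h₁, h₂]), ← Complex.coe_smul]
  simp

end PartialCoeff

namespace IsParabolicForm

variable {E : Type*} [NormedAddCommGroup E] [NormedSpace ℂ E] {L R S : E →L[ℂ] E}
  {Φ G : ℂ → ℂ → ℂ → E} {y₁ y₂ : ℝ} {N : ℕ} (hΦ : IsParabolicForm L R S Φ)
include hΦ

lemma partialCoeff_add_two (h₁ : 0 < y₁) (n m : ℤ) {z : ℂ} (hz : z.im ^ 2 < y₁ * y₂) :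
    partialCoeff y₁ y₂ Φ n m (z + 2) = partialCoeff y₁ y₂ Φ n m z :=
  lineCoeff_congr fun _ => lineCoeff_congr fun _ =>
    hΦ.map_add_two_snd (by simpa [mk_mem_siegelDomain, h₁] using hz)

variable [CompleteSpace E]

lemma siegelCoeff_eq_zero_of_le_abs (hG : IsPowQuotient N Φ G) {n : ℕ} (hn : Odd n) (hnN : n < N)
    {m : ℤ} (hm : ∀ r : ℤ, n < |r| → siegelCoeff 1 0 1 Φ n r m = 0) (r : ℤ) :
    siegelCoeff 1 0 1 Φ n r m = 0 := by
  have h : (0 : ℝ) ^ 2 < 1 * 1 := by norm_num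
  have hc := hΦ.continuous_partialCoeff one_pos h n m
  have hs (r : ℤ) (hr : ∀ k ≤ n, r ≠ 2 * k - n) : siegelCoeff 1 0 1 Φ n r m = 0 := by
    rcases Int.even_or_odd r with hr' | ⟨k, rfl⟩
    · exact hΦ.siegelCoeff_eq_zero_of_even_snd n hr' m
    · refine hm _ (not_le.mp fun hle => ?_)
      obtain ⟨l, rfl⟩ := hn
      obtain ⟨hle₁, hle₂⟩ := abs_le.mp hle
      exact hr (k + l + 1).toNat (by omega) (by omega)
  rw [hΦ.siegelCoeff_eq_zba one_pos h]
  refine (lineCoeff_congr fun x => ?_).trans (lineCoeff_zero r 0)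
  refine SeparatingDual.eq_zero_of_forall_dual_eq_zero (R := ℂ) fun ℓ => ?_
  refine eq_zero_of_lineCoeff_support (f := fun z => ℓ (partialCoeff 1 1 Φ n m z))
    (h := fun x => ℓ (partialCoeff 1 1 G n m (x + (0 : ℝ) * I))) hnN (ℓ.continuous.comp hc)
    (fun x => congrArg ℓ (hΦ.partialCoeff_add_two one_pos n m (by simp))) (fun r hr => ?_)
    (ℓ.continuous.comp (hG.continuous_partialCoeff one_pos h n m)).continuousAt (fun x => ?_) x
  · rw [lineCoeff_clm_comp ℓ r 0 hc, ← ℓ.map_zero, ← hs r hr, hΦ.siegelCoeff_eq_zba one_pos h]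
    rfl
  · rw [hG.partialCoeff_ofReal one_pos one_pos, ← Complex.coe_smul, map_smul, Complex.coe_smul]

/-- By induction on `m`: the shear and the sign change of `z` relate the coefficients with `n < |r|`
to coefficients with smaller `m`. -/
lemma siegelCoeff_eq_zero_of_odd_of_lt (hG : IsPowQuotient N Φ G) {n : ℕ} (hn : Odd n)
    (hnN : n < N) (k : ℕ) : ∀ m : ℤ, m < k → ∀ r : ℤ, siegelCoeff 1 0 1 Φ n r m = 0 := by
  induction k with
  | zero => exact fun m hm r => hΦ.siegelCoeff_eq_zero_of_neg_trd n r (by simpa using hm)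
  | succ k ih =>
    intro m hm
    have hneg (r : ℤ) (hr : r < -n) : siegelCoeff 1 0 1 Φ n r m = 0 := by
      have hshear := hΦ.siegelCoeff_shear n (r + 2 * n) (m + r + n)
      rw [ih (m + r + n) (by push_cast at hm; omega), map_zero, neg_zero] at hshear
      rw [← hshear]
      congr 1 <;> ring
    refine hΦ.siegelCoeff_eq_zero_of_le_abs hG hn hnN fun r hr => ?_
    rcases lt_abs.mp hr with hr | hr
    · rw [← neg_neg r, hΦ.siegelCoeff_neg_snd, hneg (-r) (by omega), map_zero]
    · exact hneg r (by omega)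

lemma siegelCoeff_eq_zero_of_isPowQuotient (hG : IsPowQuotient N Φ G) {n : ℤ}
    (hn : Even n ∨ n < N) (r m : ℤ) : siegelCoeff 1 0 1 Φ n r m = 0 := by
  rcases Int.even_or_odd n with hn' | hn'
  · exact hΦ.siegelCoeff_eq_zero_of_even_fst hn' r m
  replace hn := hn.resolve_left (Int.not_even_iff_odd.mpr hn')
  rcases lt_or_ge n 0 with h0 | h0
  · exact hΦ.siegelCoeff_eq_zero_of_neg_fst h0 r m
  · lift n to ℕ using h0
    exact hΦ.siegelCoeff_eq_zero_of_odd_of_lt hG (by exact_mod_cast hn') (by exact_mod_cast hn)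
      (m + 1).toNat m (by omega) r

lemma partialCoeff_zero_eq_zero (hG : IsPowQuotient N Φ G) (h₁ : 0 < y₁) (h₂ : 0 < y₂) {n m : ℤ}
    (h0 : ∀ r, siegelCoeff 1 0 1 Φ n r m = 0) : partialCoeff y₁ y₂ G n m 0 = 0 := by
  have h : (0 : ℝ) ^ 2 < y₁ * y₂ := by simp [h₁, h₂]
  have hzero (x : ℝ) : partialCoeff y₁ y₂ Φ n m (x + (0 : ℝ) * I) = 0 := by
    refine eq_zero_of_lineCoeff_eq_zero (hΦ.continuous_partialCoeff h₁ h n m)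
      (fun x => hΦ.partialCoeff_add_two h₁ n m (by simp [h₁, h₂])) (fun r => ?_) x
    rw [← h0 r, ← hΦ.siegelCoeff_height h₁ h, hΦ.siegelCoeff_eq_zba h₁ h]
    rfl
  have hG0 := eq_of_eventually_pow_smul_eq (N := N) (h := fun _ : ℝ => (0 : E))
    (hG.continuous_partialCoeff h₁ h n m).continuousAt continuousAt_const
    (.of_forall fun x => by rw [← hG.partialCoeff_ofReal h₁ h₂, hzero, smul_zero])
  simpa using hG0

end IsParabolicForm

section Diagonal

variable {E : Type*} [NormedAddCommGroup E] [NormedSpace ℂ E] {Φ G : ℂ → ℂ → ℂ → E} {N : ℕ}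

lemma IsSiegelRegular.continuousAt_comp (hG : IsSiegelRegular G) {p q r : ℂ → ℂ} {z : ℂ}
    (hp : ContinuousAt p z) (hq : ContinuousAt q z) (hr : ContinuousAt r z)
    (h : (p z, q z, r z) ∈ siegelDomain) : ContinuousAt (fun z => G (p z) (q z) (r z)) z :=
  (hG.continuousOn.continuousAt (isOpen_siegelDomain.mem_nhds h)).comp
    (f := fun z => (p z, q z, r z)) (hp.prodMk (hq.prodMk hr))

lemma IsSiegelRegular.differentiableOn_diagonal (hG : IsSiegelRegular G) {b : ℂ} (hb : 0 < b.im) :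
    DifferentiableOn ℂ (fun a => G a 0 b) {a | 0 < a.im} :=
  (hG.differentiableOn_fst 0 b).mono fun _ ha => siegelDomain_zero_iff.mpr ⟨ha, hb⟩

/-- A transformation law of `Φ` that fixes the diagonal `z = 0` and multiplies `z` by `c` restricts
to the `N`-th Taylor coefficient along the diagonal. -/
lemma IsPowQuotient.map_diagonal (hG : IsPowQuotient N Φ G) {a b c : ℂ} {p r : ℂ → ℂ}
    {A : ℂ → E →ₗ[ℂ] E} (hab : (a, 0, b) ∈ siegelDomain) (hp : ContinuousAt p 0)
    (hr : ContinuousAt r 0) (hpr : (p 0, 0, r 0) ∈ siegelDomain)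
    (hA : ContinuousAt (fun z => A z (G a z b)) 0)
    (hΦ : ∀ {z}, (a, z, b) ∈ siegelDomain → Φ (p z) (c * z) (r z) = A z (Φ a z b)) :
    c ^ N • G (p 0) 0 (r 0) = A 0 (G a 0 b) := by
  have hpr' : (p 0, c * 0, r 0) ∈ siegelDomain := by rwa [mul_zero]
  have hq : ContinuousAt (fun z => c * z) 0 := by fun_prop
  have hlim := eq_of_eventually_pow_smul_eq (N := N)
    (f := fun z => c ^ N • G (p z) (c * z) (r z))
    ((hG.continuousAt_comp hp hq hr hpr').const_smul _) hA ?_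
  · simpa using hlim
  · have hmem : ∀ᶠ z in 𝓝 (0 : ℂ), (a, z, b) ∈ siegelDomain :=
      ContinuousAt.eventually_mem (f := fun z => (a, z, b)) (by fun_prop)
        (isOpen_siegelDomain.mem_nhds hab)
    have hmem' : ∀ᶠ z in 𝓝 (0 : ℂ), (p z, c * z, r z) ∈ siegelDomain :=
      (hp.prodMk (hq.prodMk hr)).eventually_mem (isOpen_siegelDomain.mem_nhds hpr')
    filter_upwards [hmem, hmem'] with z hz hz'
    rw [smul_smul, ← mul_pow, mul_comm z c, ← hG.eq_pow_smul hz', hΦ hz, hG.eq_pow_smul hz,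
      map_smul]

end Diagonal

namespace IsParabolicForm

variable {E : Type*} [NormedAddCommGroup E] [NormedSpace ℂ E] {L R S : E →L[ℂ] E}
  {Φ G : ℂ → ℂ → ℂ → E} {N : ℕ} {a b : ℂ} (hΦ : IsParabolicForm L R S Φ)
  (hG : IsPowQuotient N Φ G)
include hΦ hG

lemma map_add_one_diagonal (ha : 0 < a.im) (hb : 0 < b.im) : G (a + 1) 0 b = -G a 0 b := by
  have hab := siegelDomain_zero_iff.mpr ⟨ha, hb⟩
  simpa using hG.map_diagonal (c := 1) (p := fun _ => a + 1) (r := fun _ => b)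
    (A := fun _ => -LinearMap.id) hab continuousAt_const continuousAt_const
    (by simpa [mk_mem_siegelDomain] using hab)
    (hG.continuousAt_comp (by fun_prop) (by fun_prop) (by fun_prop) hab).neg
    fun h => by simpa using hΦ.map_add_one_fst h

lemma map_swap_diagonal (ha : 0 < a.im) (hb : 0 < b.im) : G b 0 a = R (G a 0 b) := by
  have hab := siegelDomain_zero_iff.mpr ⟨ha, hb⟩
  simpa using hG.map_diagonal (c := 1) (p := fun _ => b) (r := fun _ => a)
    (A := fun _ => R.toLinearMap) hab continuousAt_const continuousAt_const
    (siegelDomain_swap hab) (R.continuous.continuousAt.comp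
      (hG.continuousAt_comp (by fun_prop) (by fun_prop) (by fun_prop) hab))
    fun h => by simpa using hΦ.map_swap h

variable [CompleteSpace E]

lemma lineCoeff_diagonal_eq_zero {n : ℤ} (hn : Even n ∨ n < N) (hb : 0 < b.im) :
    lineCoeff n 1 (fun a => G a 0 b) = 0 := by
  have hadd {a b : ℂ} (ha : 0 < a.im) (hb : 0 < b.im) : G a 0 (b + 1) = -G a 0 b := by
    rw [hΦ.map_swap_diagonal hG (by simpa using hb) ha, hΦ.map_add_one_diagonal hG hb ha,
      _root_.map_neg, ← hΦ.map_swap_diagonal hG hb ha]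
  have hzero := eq_zero_of_lineCoeff_eq_zero (f := fun b => lineCoeff n 1 fun a => G a 0 b)
    (y := b.im) (by
      simpa using hG.continuous_lineCoeff_fst (y := 0) one_pos (by simpa using hb) n
        (continuous_const (y := (0 : ℝ))) continuous_id)
    (fun x => lineCoeff_congr fun t => by
      rw [← one_add_one_eq_two, ← add_assoc, hadd (by simp) (by simpa using hb),
        hadd (by simp) (by simpa using hb), neg_neg])
    (fun m => hΦ.partialCoeff_zero_eq_zero hG one_pos hb
      fun r => hΦ.siegelCoeff_eq_zero_of_isPowQuotient hG hn r m) b.re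
  rwa [re_add_im] at hzero

end IsParabolicForm

/-! ### Anti-invariant binary forms of the hexagonal lattice -/

/-- The binary form with coefficients `q 0, …, q j` changes sign under the swap of the variables and
under `(x, y) ↦ (x + y, -y)`, the reflections generating the automorphism group of
`x ^ 2 + x y + y ^ 2`. -/
structure IsHexagonalAntiinvariant (j : ℕ) (q : ℕ → ℂ) : Prop where
  reverse : ∀ i ≤ j, q (j - i) = -q i
  shear : ∀ i ≤ j, (-1) ^ i * q i =
    -∑ l ∈ Finset.range (i + 1), (-1) ^ (i - l) * ((j - l).choose (i - l) : ℂ) * q l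

namespace IsHexagonalAntiinvariant

variable {j : ℕ} {q : ℕ → ℂ} (hq : IsHexagonalAntiinvariant j q) (h0 : q 0 = 0) (h2 : q 2 = 0)
include hq h0 h2

lemma apply_one (hj : 1 ≤ j) : q 1 = 0 := by
  rcases hj.eq_or_lt with rfl | hj
  · simpa [h0] using hq.reverse 0
  · have hj' : ((j - 1 : ℕ) : ℂ) ≠ 0 := Nat.cast_ne_zero.mpr (by omega)
    simpa [Finset.sum_range_succ, h0, h2, hj'] using hq.shear 2 hj

lemma apply_four (hj : 4 ≤ j) : 2 * q 4 = (j - 3 : ℕ) * q 3 := by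
  have h := hq.shear 4 hj
  simp only [Finset.sum_range_succ, Finset.sum_range_zero, h0, h2,
    hq.apply_one h0 h2 (by omega)] at h
  norm_num at h
  linear_combination h

variable (h6 : q 6 = 0)
include h6

lemma apply_six (hj : 6 ≤ j) :
    (j - 3).choose 3 * q 3 - (j - 4).choose 2 * q 4 + (j - 5 : ℕ) * q 5 = 0 := by
  have h := hq.shear 6 hj
  simp only [Finset.sum_range_succ, Finset.sum_range_zero, h0, h2, h6,
    hq.apply_one h0 h2 (by omega)] at h
  norm_num at h
  linear_combination -h

lemma apply_eight (hj : 8 ≤ j) :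
    2 * q 8 = (j - 3).choose 5 * q 3 - (j - 4).choose 4 * q 4 + (j - 5).choose 3 * q 5 +
      (j - 7 : ℕ) * q 7 := by
  have h := hq.shear 8 hj
  simp only [Finset.sum_range_succ, Finset.sum_range_zero, h0, h2, h6,
    hq.apply_one h0 h2 (by omega)] at h
  norm_num at h
  linear_combination h

lemma apply_ten (hj : 10 ≤ j) :
    2 * q 10 = (j - 3).choose 7 * q 3 - (j - 4).choose 6 * q 4 + (j - 5).choose 5 * q 5 +
      (j - 7).choose 3 * q 7 - (j - 8).choose 2 * q 8 + (j - 9 : ℕ) * q 9 := by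
  have h := hq.shear 10 hj
  simp only [Finset.sum_range_succ, Finset.sum_range_zero, h0, h2, h6,
    hq.apply_one h0 h2 (by omega)] at h
  norm_num at h
  linear_combination h

lemma apply_eq_zero_of_two_mul_le (hj : j ≤ 16) (hj12 : j ≠ 12) {i : ℕ} (hi : 2 * i ≤ j) :
    q i = 0 := by
  rcases Nat.lt_or_ge i 3 with hi3 | hi3
  · interval_cases i
    exacts [h0, hq.apply_one h0 h2 (by omega), h2]
  have hj6 : 6 ≤ j := by omega
  have hi8 : i ≤ 8 := by omega
  have h4 := hq.apply_four h0 h2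
  have h6' := hq.apply_six h0 h2 h6
  have h8 := hq.apply_eight h0 h2 h6
  have h10 := hq.apply_ten h0 h2 h6
  have r3 := hq.reverse 3
  have r4 := hq.reverse 4
  have r5 := hq.reverse 5
  have r6 := hq.reverse 6
  have r7 := hq.reverse 7
  have r8 := hq.reverse 8
  rcases hj12.lt_or_gt with hj12 | hj12 <;> interval_cases j <;>
    norm_num [Nat.choose, h0, h6] at h4 h6' h8 h10 r3 r4 r5 r6 r7 r8 <;>
    interval_cases i <;> grind

/-- For `j = 12` this fails for `(x y (x + y)) ^ 2` times the product
`x y (x + y) (x - y) (2 x + y) (x + 2 y)` of the reflection lines. -/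
lemma apply_eq_zero (hj : j ≤ 16) (hj12 : j ≠ 12) {i : ℕ} (hi : i ≤ j) : q i = 0 := by
  rcases le_or_gt (2 * i) j with h | h
  · exact hq.apply_eq_zero_of_two_mul_le h0 h2 h6 hj hj12 h
  · have hr := hq.reverse (j - i) (Nat.sub_le j i)
    have hzero := hq.apply_eq_zero_of_two_mul_le h0 h2 h6 hj hj12 (i := j - i) (by omega)
    rwa [Nat.sub_sub_self hi, hzero, neg_zero] at hr

end IsHexagonalAntiinvariant

/-! ### Symmetric powers -/

section SymmetricPower

variable {j : ℕ}

lemma coeff_C_add_C_mul_X_pow {R : Type*} [CommSemiring R] (x y : R) (n k : ℕ) :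
    ((Polynomial.C x + Polynomial.C y * Polynomial.X) ^ n).coeff k =
      x ^ (n - k) * n.choose k * y ^ k := by
  have hcomp : (Polynomial.C x + Polynomial.C y * Polynomial.X) ^ n =
      ((Polynomial.X + Polynomial.C x) ^ n).comp (Polynomial.C y * Polynomial.X) := by
    simp [add_comm]
  rw [hcomp, Polynomial.comp_C_mul_X_coeff, Polynomial.coeff_X_add_C_pow]

lemma symCoeff_upper (j : ℕ) (x y w : ℂ) (l i : Fin (j + 1)) :
    symCoeff j !![x, y; 0, w] l i =
      x ^ (j - l : ℕ) * (y ^ (l - i : ℕ) * (l : ℕ).choose i * w ^ (i : ℕ)) := by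
  have hpoly : (Polynomial.C x + Polynomial.C 0 * Polynomial.X) ^ (j - l : ℕ) =
      Polynomial.C (x ^ (j - l : ℕ)) := by simp
  change ((Polynomial.C x + Polynomial.C 0 * Polynomial.X) ^ (j - l : ℕ) *
    (Polynomial.C y + Polynomial.C w * Polynomial.X) ^ (l : ℕ)).coeff i = _
  rw [hpoly, Polynomial.coeff_C_mul, coeff_C_add_C_mul_X_pow]

lemma symAct_diagonal (x y : ℂ) (v : Fin (j + 1) → ℂ) (i : Fin (j + 1)) :
    symAct j !![x, 0; 0, y] v i = x ^ (j - i : ℕ) * y ^ (i : ℕ) * v i := by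
  rw [symAct, Finset.sum_eq_single i]
  · simp [symCoeff_upper]
  · intro l _ hl
    rw [symCoeff_upper]
    rcases lt_or_gt_of_ne hl with h | h
    · simp [Nat.choose_eq_zero_of_lt h]
    · simp [Nat.sub_ne_zero_of_lt h]
  · simp

lemma symAct_one (v : Fin (j + 1) → ℂ) : symAct j 1 v = v := by
  ext i
  simp [Matrix.one_fin_two, symAct_diagonal]

lemma symAct_swap (v : Fin (j + 1) → ℂ) (i : Fin (j + 1)) :
    symAct j !![0, 1; 1, 0] v i = v i.rev := by
  have hrev (l : Fin (j + 1)) : (i : ℕ) = j - l ↔ l = i.rev := by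
    rw [Fin.ext_iff, Fin.val_rev]
    omega
  simp [symAct, symCoeff, Polynomial.coeff_X_pow, hrev]

lemma symAct_shear (v : Fin (j + 1) → ℂ) (i : Fin (j + 1)) :
    symAct j !![1, 0; -1, 1] v i = ∑ l : Fin (j + 1), if (l : ℕ) ≤ i then
      (-1) ^ (i - l : ℕ) * ((j - l : ℕ).choose (i - l) : ℂ) * v l else 0 := by
  refine Finset.sum_congr rfl fun l _ => ?_
  have hl : symCoeff j !![1, 0; -1, 1] l i = if (l : ℕ) ≤ i then
      (-1) ^ (i - l : ℕ) * ((j - l : ℕ).choose (i - l) : ℂ) else 0 := by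
    have hX : Polynomial.C (0 : ℂ) + Polynomial.C 1 * Polynomial.X = Polynomial.X := by simp
    change ((Polynomial.C (1 : ℂ) + Polynomial.C (-1) * Polynomial.X) ^ (j - l : ℕ) *
      (Polynomial.C 0 + Polynomial.C 1 * Polynomial.X) ^ (l : ℕ)).coeff i = _
    rw [hX, Polynomial.coeff_mul_X_pow', coeff_C_add_C_mul_X_pow]
    simp [mul_comm]
  rw [hl, ite_mul, zero_mul]

lemma continuousAt_symAct_upper {X : Type*} [TopologicalSpace X] (x : ℂ) {y : X → ℂ}
    {v : X → Fin (j + 1) → ℂ} {t : X} (hy : ContinuousAt y t) (hv : ContinuousAt v t) :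
    ContinuousAt (fun t => symAct j !![x, y t; 0, 1] (v t)) t := by
  refine continuousAt_pi.mpr fun i => ?_
  simp only [symAct, symCoeff_upper]
  exact tendsto_finsetSum _ fun l _ => (((hy.pow _).mul_const _).mul_const _).const_mul _ |>.mul
    (continuousAt_pi.mp hv l)

/-- `symAct` as a continuous linear map. -/
def symActCLM (j : ℕ) (m : Matrix (Fin 2) (Fin 2) ℂ) : (Fin (j + 1) → ℂ) →L[ℂ] Fin (j + 1) → ℂ :=
  LinearMap.toContinuousLinearMap
    { toFun := symAct j m, map_add' := symAct_add j m, map_smul' := symAct_smul j m }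

@[simp]
lemma symActCLM_apply (m : Matrix (Fin 2) (Fin 2) ℂ) (v : Fin (j + 1) → ℂ) :
    symActCLM j m v = symAct j m v := rfl

end SymmetricPower

/-- The transformation laws of a Siegel modular form `Φ a z b = F (a z; z b)` of weight `(j, 2)`
with the sign character, under generators of the Klingen and Siegel parabolic subgroups. -/
structure IsSymForm (j : ℕ) (Φ : ℂ → ℂ → ℂ → Fin (j + 1) → ℂ) : Prop extends
    IsParabolicForm (symActCLM j !![1, 0; -1, 1]) (-symActCLM j !![0, 1; 1, 0])
      (symActCLM j !![1, 0; 0, -1]) Φ where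
  map_neg_one_div : ∀ {a z b : ℂ}, (a, z, b) ∈ siegelDomain →
    Φ (-1 / a) (z / a) (b - z ^ 2 / a) = -(a ^ 2 • symAct j !![a, z; 0, 1] (Φ a z b))

namespace IsSymForm

variable {j N : ℕ} {Φ G : ℂ → ℂ → ℂ → Fin (j + 1) → ℂ} {a b : ℂ}

section Diagonal

variable (hΦ : IsSymForm j Φ) (hG : IsPowQuotient N Φ G)
include hΦ hG

lemma map_neg_one_div_diagonal (ha : 0 < a.im) (hb : 0 < b.im) (i : Fin (j + 1)) :
    G (-1 / a) 0 b i = -a ^ (2 + N + (j - i) : ℤ) * G a 0 b i := by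
  have ha0 : a ≠ 0 := fun h => by simp [h] at ha
  have hab := siegelDomain_zero_iff.mpr ⟨ha, hb⟩
  have hGc : ContinuousAt (fun z => G a z b) 0 :=
    hG.continuousAt_comp continuousAt_const continuousAt_id continuousAt_const hab
  have hdiag := hG.map_diagonal (c := a⁻¹) (p := fun _ => -1 / a) (r := fun z => b - z ^ 2 / a)
    (A := fun z => -(a ^ 2 • (symActCLM j !![a, z; 0, 1]).toLinearMap)) hab continuousAt_const
    (by fun_prop) (siegelDomain_zero_iff.mpr ⟨im_neg_one_div_pos ha, by simpa using hb⟩)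
    ((continuousAt_symAct_upper a continuousAt_id hGc).const_smul (a ^ 2)).neg
    fun h => by simpa [div_eq_inv_mul] using hΦ.map_neg_one_div h
  have hi := congrFun hdiag i
  simp only [ne_eq, OfNat.ofNat_ne_zero, not_false_eq_true, zero_pow, zero_div, sub_zero,
    Pi.smul_apply, LinearMap.neg_apply, LinearMap.smul_apply, Pi.neg_apply,
    ContinuousLinearMap.coe_coe, symActCLM_apply, symAct_diagonal, one_pow, mul_one, smul_eq_mul,
    inv_pow] at hi
  rw [inv_mul_eq_iff_eq_mul₀ (pow_ne_zero N ha0)] at hi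
  have hij : ((j : ℤ) - i) = ((j - i : ℕ) : ℤ) := by omega
  rw [hi, hij]
  norm_cast
  ring

lemma diagonal_eq_neg_rev (ha : 0 < a.im) (hb : 0 < b.im) (i : Fin (j + 1)) :
    G a 0 b i = -G b 0 a i.rev := by
  simp [hΦ.map_swap_diagonal hG hb ha, symAct_swap]

lemma isSignModular_fst (hb : 0 < b.im) (i : Fin (j + 1)) :
    IsSignModular (2 + N + (j - i)) fun a => G a 0 b i where
  differentiableOn := differentiableOn_pi.mp (hG.differentiableOn_diagonal hb) i
  map_add_one _ ha := congrFun (hΦ.map_add_one_diagonal hG ha hb) i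
  map_neg_one_div _ ha := hΦ.map_neg_one_div_diagonal hG ha hb i

lemma isSignModular_snd (ha : 0 < a.im) (i : Fin (j + 1)) :
    IsSignModular (2 + N + i) fun b => G a 0 b i := by
  have h := ((hΦ.isSignModular_fst hG ha i.rev).const_mul (-1)).congr
    (h := fun b => G a 0 b i) fun b hb => by rw [hΦ.diagonal_eq_neg_rev hG ha hb, neg_one_mul]
  convert h using 1
  rw [Fin.val_rev]
  omega

lemma lineCoeff_diagonal_apply_eq_zero {n : ℤ} (hn : Even n ∨ n < N) (hb : 0 < b.im)
    (i : Fin (j + 1)) : lineCoeff n 1 (fun a => G a 0 b i) = 0 := by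
  have hproj := lineCoeff_clm_comp (.proj (R := ℂ) (φ := fun _ => ℂ) i) n 1
    (f := fun a => G a 0 b) (continuous_line (hG.differentiableOn_diagonal hb) one_pos)
  simpa [hΦ.lineCoeff_diagonal_eq_zero hG hn hb] using hproj

lemma diagonal_eq_zero_of_weight_fst {M : ℕ} (hM : Odd M) (hMN : M ≤ N + 1) {i : Fin (j + 1)}
    (hw : (2 + N + (j - i) : ℤ) < 6 * M ∨ (2 + N + (j - i) : ℤ) = 6 * M + 2) (ha : 0 < a.im)
    (hb : 0 < b.im) : G a 0 b i = 0 :=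
  (hΦ.isSignModular_fst hG hb i).eq_zero_of_lineCoeff_eq_zero hM
    (fun n hn => hΦ.lineCoeff_diagonal_apply_eq_zero hG (by
      rw [or_iff_not_imp_right, not_lt]
      intro h
      obtain rfl : n = M - 1 := by omega
      exact (by exact_mod_cast hM : Odd (M : ℤ)).sub_odd odd_one) hb i) hw ha

lemma diagonal_eq_zero_of_weight_snd {M : ℕ} (hM : Odd M) (hMN : M ≤ N + 1) {i : Fin (j + 1)}
    (hw : (2 + N + i : ℤ) < 6 * M ∨ (2 + N + i : ℤ) = 6 * M + 2) (ha : 0 < a.im)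
    (hb : 0 < b.im) : G a 0 b i = 0 := by
  have hi : (j - i.rev : ℤ) = i := by
    rw [Fin.val_rev]
    omega
  rw [hΦ.diagonal_eq_neg_rev hG ha hb,
    hΦ.diagonal_eq_zero_of_weight_fst hG hM hMN (by rwa [hi]) hb ha, neg_zero]

end Diagonal

end IsSymForm

/-! ### Vanishing -/

namespace IsParabolicForm

variable {E : Type*} [NormedAddCommGroup E] [NormedSpace ℂ E] [CompleteSpace E]
  {L R S : E →L[ℂ] E} {Φ : ℂ → ℂ → ℂ → E} (hΦ : IsParabolicForm L R S Φ)
include hΦ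

lemma siegelCoeff_one_eq_zero_of_ne {r : ℤ} (hr : r ≠ 1) (hr' : r ≠ -1) :
    siegelCoeff 1 0 1 Φ 1 r 1 = 0 := by
  have hneg {r : ℤ} (hr : r < -2) : siegelCoeff 1 0 1 Φ 1 r 1 = 0 := by
    have hshear := hΦ.siegelCoeff_shear 1 (r + 2) (r + 2)
    rw [hΦ.siegelCoeff_eq_zero_of_neg_trd 1 (r + 2) (m := r + 2) (by omega)] at hshear
    simpa using hshear
  rcases Int.even_or_odd r with h | ⟨k, rfl⟩
  · exact hΦ.siegelCoeff_eq_zero_of_even_snd 1 h 1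
  rcases lt_or_ge k (-1) with hk | hk
  · exact hneg (by omega)
  · rw [← neg_neg (2 * k + 1), hΦ.siegelCoeff_neg_snd, hneg (by omega), map_zero]

lemma partialCoeff_one_zero : partialCoeff 1 1 Φ 1 1 0 =
    siegelCoeff 1 0 1 Φ 1 1 1 + S (siegelCoeff 1 0 1 Φ 1 1 1) := by
  have h : (0 : ℝ) ^ 2 < 1 * 1 := by norm_num
  have hc := hΦ.continuous_partialCoeff one_pos h 1 1
  refine (SeparatingDual.eq_iff_forall_dual_eq (R := ℂ)).mpr fun ℓ => ?_
  have hline (r : ℤ) : lineCoeff r 0 (fun z => ℓ (partialCoeff 1 1 Φ 1 1 z)) =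
      ℓ (siegelCoeff 1 0 1 Φ 1 r 1) := by
    rw [lineCoeff_clm_comp ℓ r 0 hc, hΦ.siegelCoeff_eq_zba one_pos h]
    rfl
  have hsum := eq_sum_lineCoeff (f := fun z => ℓ (partialCoeff 1 1 Φ 1 1 z))
    (ℓ.continuous.comp hc)
    (fun x => congrArg ℓ (hΦ.partialCoeff_add_two one_pos 1 1 (by simp))) {1, -1}
    (fun r hr => by
      simp only [Finset.mem_insert, Finset.mem_singleton, not_or] at hr
      rw [hline, hΦ.siegelCoeff_one_eq_zero_of_ne hr.1 hr.2, map_zero]) 0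
  rw [Finset.sum_pair (by decide)] at hsum
  simpa [hline, hΦ.siegelCoeff_neg_snd] using hsum

end IsParabolicForm

namespace IsSymForm

variable {j : ℕ} {Φ : ℂ → ℂ → ℂ → Fin (j + 1) → ℂ} (hΦ : IsSymForm j Φ)
include hΦ

lemma siegelCoeff_one_apply_eq_zero {i : Fin (j + 1)} (hi : Even (i : ℕ))
    (hi6 : (i : ℕ) < 4 ∨ (i : ℕ) = 6) : siegelCoeff 1 0 1 Φ 1 1 1 i = 0 := by
  have hquot : IsPowQuotient 0 Φ Φ := ⟨hΦ.toIsSiegelRegular, by simp⟩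
  have hdiag : partialCoeff 1 1 Φ 1 1 0 i = 0 := by
    have hproj := hΦ.partialCoeff_clm_comp one_pos (y := 0) (y₂ := 1) (by norm_num)
      (.proj (R := ℂ) (φ := fun _ => ℂ) i) 1 1 0
    simp only [ofReal_zero, zero_mul, add_zero, ContinuousLinearMap.proj_apply] at hproj
    rw [← hproj]
    refine (lineCoeff_congr fun xb => ?_).trans (lineCoeff_zero 1 1)
    refine (lineCoeff_congr fun xa => ?_).trans (lineCoeff_zero 1 1)
    exact hΦ.diagonal_eq_zero_of_weight_snd hquot odd_one le_rfl (by push_cast; omega) (by simp)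
      (by simp)
  rw [hΦ.partialCoeff_one_zero] at hdiag
  simpa [symAct_diagonal, hi.neg_one_pow, ← two_mul] using hdiag

lemma isHexagonalAntiinvariant : IsHexagonalAntiinvariant j fun n =>
    if h : n < j + 1 then siegelCoeff 1 0 1 Φ 1 1 1 ⟨n, h⟩ else 0 where
  reverse i hi := by
    have hswap := congrFun (hΦ.siegelCoeff_swap one_pos (y := 0) (y₂ := 1) (by norm_num)
      1 1 1) ⟨j - i, by omega⟩
    simp only [_root_.neg_apply, symActCLM_apply, Pi.neg_apply, symAct_swap] at hswap
    have hrev : Fin.rev (⟨j - i, by omega⟩ : Fin (j + 1)) = ⟨i, by omega⟩ := by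
      ext
      simp only [Fin.val_rev]
      omega
    rw [dif_pos (by omega), dif_pos (by omega), hswap, hrev]
  shear i hi := by
    have hshear := congrFun (hΦ.siegelCoeff_shear 1 1 1) ⟨i, by omega⟩
    rw [show (1 : ℤ) - 2 * 1 = -1 by norm_num, sub_self, zero_add, hΦ.siegelCoeff_neg_snd] at hshear
    simp only [symActCLM_apply, Pi.neg_apply, symAct_shear, symAct_diagonal, one_pow,
      one_mul] at hshear
    have hrange : Finset.range (i + 1) = {l ∈ Finset.range (j + 1) | l ≤ i} := by
      ext l
      simp only [Finset.mem_range, Finset.mem_filter]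
      omega
    rw [dif_pos (by omega), hshear, hrange, Finset.sum_filter, ← Fin.sum_univ_eq_sum_range]
    simp only [Fin.is_lt, dite_true, Fin.eta]

section Diagonal

variable {N : ℕ} {G : ℂ → ℂ → ℂ → Fin (j + 1) → ℂ} {a b : ℂ} (hG : IsPowQuotient N Φ G)
include hG

lemma diagonal_eq_zero_of_two_le (hN : 2 ≤ N) (hj : j ≤ 25) (ha : 0 < a.im) (hb : 0 < b.im) :
    G a 0 b = 0 := by
  obtain ⟨M, hM, hMN, hlt⟩ : ∃ M, Odd M ∧ M ≤ N + 1 ∧ 4 + 2 * N + j < 12 * M := by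
    rcases Nat.even_or_odd N with h | h
    · exact ⟨N + 1, h.add_one, le_rfl, by omega⟩
    · exact ⟨N, h, Nat.le_succ N, by grind⟩
  ext i
  by_cases hw : (2 + N + (j - i) : ℤ) < 6 * M
  · exact hΦ.diagonal_eq_zero_of_weight_fst hG hM hMN (.inl hw) ha hb
  · exact hΦ.diagonal_eq_zero_of_weight_snd hG hM hMN (.inl (by omega)) ha hb

lemma lineCoeff_diagonal_snd_eq_zero {n : ℤ} (hn : Even n ∨ n < N) (ha : 0 < a.im)
    (i : Fin (j + 1)) : lineCoeff n 1 (fun b => G a 0 b i) = 0 := by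
  rw [lineCoeff_congr (g := fun b => -G b 0 a i.rev)
    fun x => hΦ.diagonal_eq_neg_rev hG ha (by simp) i, lineCoeff_neg,
    hΦ.lineCoeff_diagonal_apply_eq_zero hG hn ha, neg_zero]

lemma lineCoeff_lineCoeff_diagonal_eq_zero (h1 : ∀ r, siegelCoeff 1 0 1 Φ 1 r 1 = 0)
    (i : Fin (j + 1)) :
    lineCoeff 1 1 (fun b => lineCoeff 1 1 fun a => G a 0 b i) = 0 := by
  have hproj := hG.partialCoeff_clm_comp one_pos (y := 0) (y₂ := 1) (by norm_num)
    (.proj (R := ℂ) (φ := fun _ => ℂ) i) 1 1 0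
  simp only [ofReal_zero, zero_mul, add_zero, hΦ.partialCoeff_zero_eq_zero hG one_pos one_pos h1,
    map_zero] at hproj
  exact hproj

lemma diagonal_eq_zero_of_siegelCoeff_one (hN : N < 2) (hj : j < 18)
    (h1 : ∀ r, siegelCoeff 1 0 1 Φ 1 r 1 = 0) (ha : 0 < a.im) (hb : 0 < b.im) : G a 0 b = 0 := by
  ext i
  by_cases hw₁ : (2 + N + (j - i) : ℤ) < 6
  · exact hΦ.diagonal_eq_zero_of_weight_fst hG odd_one (by omega) (.inl (by simpa using hw₁)) ha hb
  by_cases hw₂ : (2 + N + i : ℤ) < 6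
  · exact hΦ.diagonal_eq_zero_of_weight_snd hG odd_one (by omega) (.inl (by simpa using hw₂)) ha hb
  have hlow {n : ℤ} (hn : n < 1) : Even n ∨ n < N := by
    rcases eq_or_ne n 0 with rfl | hn0
    exacts [.inl .zero, .inr (by omega)]
  exact eq_zero_of_isSignModular₂ (g := fun a b => G a 0 b i) (by omega) (by omega)
    (fun _ hb => hΦ.isSignModular_fst hG hb i) (fun _ ha => hΦ.isSignModular_snd hG ha i)
    (fun _ hb _ hn => hΦ.lineCoeff_diagonal_apply_eq_zero hG (hlow hn) hb i)
    (fun _ ha _ hn => hΦ.lineCoeff_diagonal_snd_eq_zero hG (hlow hn) ha i)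
    (hΦ.lineCoeff_lineCoeff_diagonal_eq_zero hG h1 i) ha hb

end Diagonal

variable (hj : j ≤ 16) (hj12 : j ≠ 12)
include hj hj12

lemma siegelCoeff_one_eq_zero (r : ℤ) : siegelCoeff 1 0 1 Φ 1 r 1 = 0 := by
  have hone : siegelCoeff 1 0 1 Φ 1 1 1 = 0 := by
    have hcoord {n : ℕ} (hn : Even n) (hn6 : n < 4 ∨ n = 6) :
        (if h : n < j + 1 then siegelCoeff 1 0 1 Φ 1 1 1 ⟨n, h⟩ else 0) = 0 :=
      dite_eq_right_iff.mpr fun h => hΦ.siegelCoeff_one_apply_eq_zero hn hn6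
    ext i
    have hzero := hΦ.isHexagonalAntiinvariant.apply_eq_zero (hcoord .zero (by simp))
      (hcoord even_two (by simp)) (hcoord (by decide) (by simp)) hj hj12 i.is_le
    rwa [dif_pos i.is_lt] at hzero
  by_cases hr : r = 1
  · rw [hr, hone]
  by_cases hr' : r = -1
  · rw [hr', hΦ.siegelCoeff_neg_snd, hone, map_zero]
  exact hΦ.siegelCoeff_one_eq_zero_of_ne hr hr'

theorem eq_zero {a z b : ℂ} (h : (a, z, b) ∈ siegelDomain) : Φ a z b = 0 :=
  hΦ.eq_zero_of_forall_isPowQuotient (fun N _ hG _ _ ha hb => (le_or_gt 2 N).elim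
    (fun hN => hΦ.diagonal_eq_zero_of_two_le hG hN (hj.trans (by norm_num)) ha hb)
    (fun hN => hΦ.diagonal_eq_zero_of_siegelCoeff_one hG hN (hj.trans_lt (by norm_num))
      (hΦ.siegelCoeff_one_eq_zero hj hj12) ha hb)) h

end IsSymForm

/-! ### Generators of `Sp(4, ℤ)` and the sign character -/

section SemiconjBy

variable {G H : Type*} [Group G] [Monoid H] {φ : G →* H} {g : G} {x y : H} {M : Submonoid H}

lemma mem_of_map_mul_mem (hφ : MonoidHom.mrange φ ≤ M) (h : φ g * x ∈ M) : x ∈ M := by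
  have hx : φ g⁻¹ * (φ g * x) = x := by
    rw [← mul_assoc, ← map_mul, inv_mul_cancel, map_one, one_mul]
  exact hx ▸ M.mul_mem (hφ ⟨g⁻¹, rfl⟩) h

lemma mem_of_semiconjBy_map (hφ : MonoidHom.mrange φ ≤ M) (h : SemiconjBy (φ g) x y) (hx : x ∈ M) :
    y ∈ M := by
  have hy : φ g * x * φ g⁻¹ = y := by
    rw [h.eq, mul_assoc, ← map_mul, mul_inv_cancel, map_one, mul_one]
  exact hy ▸ M.mul_mem (M.mul_mem (hφ ⟨g, rfl⟩) hx) (hφ ⟨g⁻¹, rfl⟩)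

lemma map_eq_of_semiconjBy_map {A : Type*} [CommMonoid A] (χ : H →* A)
    (h : SemiconjBy (φ g) x y) : χ x = χ y :=
  isConj_iff_eq.mp (χ.map_isConj ⟨φ.toHomUnits g, h⟩)

end SemiconjBy

section ModularGroup

open ModularGroup
open scoped MatrixGroups

variable {A : Type*} [CommMonoid A] {f : SL(2, ℤ) →* A}

lemma map_S_eq_map_T (hf : ∀ g, f g ^ 2 = 1) : f S = f T := by
  have hrel : (S * T) ^ 3 = S ^ 2 := by decide
  have hST : f (S * T) = 1 := by
    calc f (S * T) = f (S * T) ^ 3 := by rw [pow_succ, hf, one_mul]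
      _ = 1 := by rw [← map_pow, hrel, map_pow, hf]
  calc f S = f S * f T ^ 2 := by rw [hf, mul_one]
    _ = f (S * T) * f T := by rw [sq, ← mul_assoc, map_mul]
    _ = f T := by rw [hST, one_mul]

lemma map_eq_one_of_map_T_eq_one (hf : ∀ g, f g ^ 2 = 1) (hT : f T = 1) (g : SL(2, ℤ)) :
    f g = 1 := by
  suffices f = 1 by rw [this, MonoidHom.one_apply]
  refine MonoidHom.eq_of_eqOn_dense SpecialLinearGroup.SL2Z_generators ?_
  rintro x (rfl | rfl)
  · rw [map_S_eq_map_T hf, hT, MonoidHom.one_apply]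
  · rw [hT, MonoidHom.one_apply]

lemma exists_SL2_row_one_mul_eq_zero (x y : ℤ) : ∃ g : SL(2, ℤ), g 1 0 * x + g 1 1 * y = 0 := by
  rcases (Int.gcd x y).eq_zero_or_pos with h | h
  · obtain ⟨rfl, rfl⟩ := Int.gcd_eq_zero_iff.mp h
    exact ⟨1, by simp⟩
  · obtain ⟨m, n, hmn, hx, hy⟩ := Int.exists_gcd_one h
    obtain ⟨g, h0, h1⟩ := (Int.isCoprime_iff_gcd_eq_one.mpr hmn).symm.neg_left.exists_SL2_row 1
    exact ⟨g, by rw [h0, h1]; linear_combination (-n) * hx + m * hy⟩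

end ModularGroup

lemma mem_Sp4Z_iff {γ : Matrix (Fin 4) (Fin 4) ℤ} : γ ∈ Sp4Z ↔
    ∀ i j, γ 0 i * γ 2 j + γ 1 i * γ 3 j - γ 2 i * γ 0 j - γ 3 i * γ 1 j = J4 i j := by
  change γᵀ * J4 * γ = J4 ↔ _
  rw [← Matrix.ext_iff]
  refine forall₂_congr fun i j => Eq.congr_left ?_
  simp [J4, Matrix.mul_apply, Fin.sum_univ_four]
  ring

section Membership

variable {x y z w : ℤ} (h : x * w - y * z = 1)
include h

lemma fst_mem_Sp4Z : !![x, 0, y, 0; 0, 1, 0, 0; z, 0, w, 0; 0, 0, 0, 1] ∈ Sp4Z := by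
  refine mem_Sp4Z_iff.mpr fun i j => ?_
  fin_cases i <;> fin_cases j <;> simp [J4] <;> linarith

lemma snd_mem_Sp4Z : !![1, 0, 0, 0; 0, x, 0, y; 0, 0, 1, 0; 0, z, 0, w] ∈ Sp4Z := by
  refine mem_Sp4Z_iff.mpr fun i j => ?_
  fin_cases i <;> fin_cases j <;> simp [J4] <;> linarith

lemma levi_mem_Sp4Z : !![x, y, 0, 0; z, w, 0, 0; 0, 0, w, -z; 0, 0, -y, x] ∈ Sp4Z := by
  refine mem_Sp4Z_iff.mpr fun i j => ?_
  fin_cases i <;> fin_cases j <;> simp [J4] <;> linarith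

end Membership

/-- The group `Sp(4, ℤ)` as a submonoid of the integer matrices. -/
def sp4 : Submonoid (Matrix (Fin 4) (Fin 4) ℤ) where
  carrier := Sp4Z
  one_mem' := by simp [Sp4Z]
  mul_mem' {γ δ} hγ hδ := by
    change γᵀ * J4 * γ = J4 at hγ
    change δᵀ * J4 * δ = J4 at hδ
    calc (γ * δ)ᵀ * J4 * (γ * δ) = δᵀ * (γᵀ * J4 * γ) * δ := by
          simp only [Matrix.transpose_mul, Matrix.mul_assoc]
      _ = J4 := by rw [hγ, hδ]

section Embeddings

open ModularGroup
open scoped MatrixGroups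

lemma SL2_det_eq_one (g : SL(2, ℤ)) : g 0 0 * g 1 1 - g 0 1 * g 1 0 = 1 := by
  rw [← Matrix.det_fin_two, g.det_coe]

/-- The embedding of `SL(2, ℤ)` acting on the first variable `a` of `(a z; z b)`. -/
def fstEmb : SL(2, ℤ) →* sp4 where
  toFun g := ⟨!![g 0 0, 0, g 0 1, 0; 0, 1, 0, 0; g 1 0, 0, g 1 1, 0; 0, 0, 0, 1],
    fst_mem_Sp4Z (SL2_det_eq_one g)⟩
  map_one' := Subtype.ext (by decide)
  map_mul' g h := by
    ext i j
    fin_cases i <;> fin_cases j <;> simp [Matrix.mul_apply, Fin.sum_univ_four, Fin.sum_univ_two]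

/-- The embedding of `SL(2, ℤ)` acting on the second variable `b` of `(a z; z b)`. -/
def sndEmb : SL(2, ℤ) →* sp4 where
  toFun g := ⟨!![1, 0, 0, 0; 0, g 0 0, 0, g 0 1; 0, 0, 1, 0; 0, g 1 0, 0, g 1 1],
    snd_mem_Sp4Z (SL2_det_eq_one g)⟩
  map_one' := Subtype.ext (by decide)
  map_mul' g h := by
    ext i j
    fin_cases i <;> fin_cases j <;> simp [Matrix.mul_apply, Fin.sum_univ_four, Fin.sum_univ_two]

/-- The embedding of `SL(2, ℤ)` in the Levi factor of the Siegel parabolic subgroup, acting by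
`τ ↦ g τ gᵀ`. -/
def leviEmb : SL(2, ℤ) →* sp4 where
  toFun g := ⟨!![g 0 0, g 0 1, 0, 0; g 1 0, g 1 1, 0, 0; 0, 0, g 1 1, -g 1 0;
      0, 0, -g 0 1, g 0 0],
    levi_mem_Sp4Z (SL2_det_eq_one g)⟩
  map_one' := Subtype.ext (by decide)
  map_mul' g h := by
    ext i j
    fin_cases i <;> fin_cases j <;>
      simp [Matrix.mul_apply, Fin.sum_univ_four, Fin.sum_univ_two] <;> ring

/-- The translation `τ ↦ τ + (x y; y w)`. -/
def translation (x y w : ℤ) : sp4 :=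
  ⟨!![1, 0, x, y; 0, 1, y, w; 0, 0, 1, 0; 0, 0, 0, 1], by
    refine mem_Sp4Z_iff.mpr fun i j => ?_
    fin_cases i <;> fin_cases j <;> simp [J4]⟩

lemma translation_mul (x y w x' y' w' : ℤ) :
    translation x y w * translation x' y' w' = translation (x + x') (y + y') (w + w') := by
  ext i j
  fin_cases i <;> fin_cases j <;> simp [translation, add_comm]

lemma fstEmb_T_zpow (x : ℤ) : fstEmb (T ^ x) = translation x 0 0 := by
  ext i j
  fin_cases i <;> fin_cases j <;> simp [fstEmb, translation, coe_T_zpow]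

lemma sndEmb_T_zpow (w : ℤ) : sndEmb (T ^ w) = translation 0 0 w := by
  ext i j
  fin_cases i <;> fin_cases j <;> simp [sndEmb, translation, coe_T_zpow]

lemma semiconjBy_fstEmb_sndEmb (g : SL(2, ℤ)) :
    SemiconjBy (leviEmb S) (fstEmb g) (sndEmb g) := by
  ext i j
  fin_cases i <;> fin_cases j <;>
    simp [leviEmb, fstEmb, sndEmb, S]

lemma semiconjBy_leviEmb_T_translation :
    SemiconjBy (sndEmb S) (leviEmb T) (translation 0 1 0) :=
  Subtype.ext (by decide)

lemma semiconjBy_translation (c : ℤ) :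
    SemiconjBy (leviEmb T) (translation 0 0 c) (translation c c c) := by
  ext i j
  fin_cases i <;> fin_cases j <;>
    simp [leviEmb, translation, T]

end Embeddings

section Generation

open ModularGroup
open scoped MatrixGroups

lemma eq_translation_mul_leviEmb {γ : sp4} (h₀₀ : γ.1 0 0 = 1) (h₁₀ : γ.1 1 0 = 0)
    (h₂₀ : γ.1 2 0 = 0) (h₃₀ : γ.1 3 0 = 0) (h₁₁ : γ.1 1 1 = 1) (h₁₃ : γ.1 1 3 = 0)
    (h₃₁ : γ.1 3 1 = 0) (h₃₃ : γ.1 3 3 = 1) :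
    γ = translation (γ.1 0 2 + γ.1 0 3 * γ.1 0 1) (γ.1 0 3) 0 * leviEmb (T ^ γ.1 0 1) := by
  have r₀₁ : γ.1 2 1 = 0 := by simpa [J4, *] using mem_Sp4Z_iff.mp γ.2 0 1
  have r₀₂ : γ.1 2 2 = 1 := by simpa [J4, *] using mem_Sp4Z_iff.mp γ.2 0 2
  have r₀₃ : γ.1 2 3 = 0 := by simpa [J4, *] using mem_Sp4Z_iff.mp γ.2 0 3
  have r₁₂ : γ.1 0 1 + γ.1 3 2 = 0 := by simpa [J4, *] using mem_Sp4Z_iff.mp γ.2 1 2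
  have r₂₃ : γ.1 1 2 - γ.1 0 3 = 0 := by simpa [J4, *] using mem_Sp4Z_iff.mp γ.2 2 3
  ext i j
  fin_cases i <;> fin_cases j <;>
    simp [translation, leviEmb, coe_T_zpow, *] <;> linarith

variable {M : Submonoid sp4} (hfst : MonoidHom.mrange fstEmb ≤ M)
  (hlevi : MonoidHom.mrange leviEmb ≤ M)
include hfst hlevi

lemma mrange_sndEmb_le : MonoidHom.mrange sndEmb ≤ M := by
  rintro _ ⟨g, rfl⟩
  exact mem_of_semiconjBy_map hlevi (semiconjBy_fstEmb_sndEmb g) (hfst ⟨g, rfl⟩)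

lemma translation_mem (x y w : ℤ) : translation x y w ∈ M := by
  have hx : translation (x - y) 0 0 ∈ M := hfst ⟨_, fstEmb_T_zpow _⟩
  have hw (c : ℤ) : translation 0 0 c ∈ M := mrange_sndEmb_le hfst hlevi ⟨_, sndEmb_T_zpow c⟩
  have hy : translation y y y ∈ M :=
    mem_of_semiconjBy_map hlevi (semiconjBy_translation y) (hw y)
  simpa [translation_mul] using M.mul_mem (M.mul_mem hx hy) (hw (w - y))

lemma mem_of_column_eq_single {γ : sp4} (h₀₀ : γ.1 0 0 = 1) (h₁₀ : γ.1 1 0 = 0)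
    (h₂₀ : γ.1 2 0 = 0) (h₃₀ : γ.1 3 0 = 0) : γ ∈ M := by
  have r₀₁ : γ.1 2 1 = 0 := by simpa [J4, *] using mem_Sp4Z_iff.mp γ.2 0 1
  have r₀₃ : γ.1 2 3 = 0 := by simpa [J4, *] using mem_Sp4Z_iff.mp γ.2 0 3
  have r₁₃ : γ.1 1 1 * γ.1 3 3 - γ.1 3 1 * γ.1 1 3 = 1 := by
    simpa [J4, *] using mem_Sp4Z_iff.mp γ.2 1 3
  let g : SL(2, ℤ) := ⟨!![γ.1 3 3, -γ.1 1 3; -γ.1 3 1, γ.1 1 1], by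
    rw [Matrix.det_fin_two_of]; linarith⟩
  refine mem_of_map_mul_mem (mrange_sndEmb_le hfst hlevi) (g := g) ?_
  rw [eq_translation_mul_leviEmb (γ := sndEmb g * γ)]
  · exact M.mul_mem (translation_mem hfst hlevi _ _ _) (hlevi ⟨_, rfl⟩)
  all_goals
    simp [g, sndEmb, Matrix.mul_apply, Fin.sum_univ_four, *] <;> linarith

lemma mem_of_column_tail_eq_zero {γ : sp4} (h₁₀ : γ.1 1 0 = 0) (h₂₀ : γ.1 2 0 = 0)
    (h₃₀ : γ.1 3 0 = 0) : γ ∈ M := by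
  have r₀₂ : γ.1 0 0 * γ.1 2 2 = 1 := by simpa [J4, *] using mem_Sp4Z_iff.mp γ.2 0 2
  rcases Int.eq_one_or_neg_one_of_mul_eq_one r₀₂ with h | h
  · exact mem_of_column_eq_single hfst hlevi h h₁₀ h₂₀ h₃₀
  · refine mem_of_map_mul_mem hfst (g := -1) ?_
    apply mem_of_column_eq_single hfst hlevi <;>
      simp [fstEmb, Matrix.mul_apply, Fin.sum_univ_four, *]

theorem mem_of_mrange_fstEmb_le_of_mrange_leviEmb_le (γ : sp4) : γ ∈ M := by
  have hsnd := mrange_sndEmb_le hfst hlevi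
  have clear_one {γ : sp4} (h₂₀ : γ.1 2 0 = 0) (h₃₀ : γ.1 3 0 = 0) : γ ∈ M := by
    obtain ⟨g, hg⟩ := exists_SL2_row_one_mul_eq_zero (γ.1 0 0) (γ.1 1 0)
    refine mem_of_map_mul_mem hlevi (g := g) ?_
    apply mem_of_column_tail_eq_zero hfst hlevi <;>
      simp [leviEmb, Matrix.mul_apply, Fin.sum_univ_four, *]
  have clear_three {γ : sp4} (h₂₀ : γ.1 2 0 = 0) : γ ∈ M := by
    obtain ⟨g, hg⟩ := exists_SL2_row_one_mul_eq_zero (γ.1 1 0) (γ.1 3 0)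
    refine mem_of_map_mul_mem hsnd (g := g) ?_
    apply clear_one <;> simp [sndEmb, Matrix.mul_apply, Fin.sum_univ_four, *]
  obtain ⟨g, hg⟩ := exists_SL2_row_one_mul_eq_zero (γ.1 0 0) (γ.1 2 0)
  refine mem_of_map_mul_mem hfst (g := g) ?_
  apply clear_three
  simp [fstEmb, Matrix.mul_apply, Fin.sum_univ_four, *]

end Generation

section SignCharacter

open ModularGroup
open scoped MatrixGroups

variable {A : Type*} [CommMonoid A] {χ : sp4 →* A}

lemma map_sndEmb_eq_map_fstEmb (χ : sp4 →* A) (g : SL(2, ℤ)) : χ (sndEmb g) = χ (fstEmb g) :=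
  (map_eq_of_semiconjBy_map χ (semiconjBy_fstEmb_sndEmb g)).symm

lemma map_translation_snd_eq (χ : sp4 →* A) :
    χ (translation 0 0 1) = χ (translation 1 0 0) := by
  rw [← sndEmb_T_zpow, ← fstEmb_T_zpow, map_sndEmb_eq_map_fstEmb]

lemma map_leviEmb_T_eq (χ : sp4 →* A) : χ (leviEmb T) = χ (translation 0 1 0) :=
  map_eq_of_semiconjBy_map χ semiconjBy_leviEmb_T_translation

variable (hχ : ∀ γ, χ γ ^ 2 = 1)
include hχ

lemma map_translation_mid_eq : χ (translation 0 1 0) = χ (translation 1 0 0) := by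
  have hsum : translation 1 1 1 = translation 1 0 0 * translation 0 1 0 * translation 0 0 1 := by
    simp [translation_mul]
  calc χ (translation 0 1 0) = χ (translation 1 0 0) ^ 2 * χ (translation 0 1 0) := by
        rw [hχ, one_mul]
    _ = χ (translation 1 1 1) := by
        rw [hsum, map_mul, map_mul, map_translation_snd_eq, sq, mul_right_comm]
    _ = χ (translation 1 0 0) := by
        rw [← map_eq_of_semiconjBy_map χ (semiconjBy_translation 1), map_translation_snd_eq]

lemma map_eq_one_of_map_translation_eq_one (hT : χ (translation 1 0 0) = 1) (γ : sp4) :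
    χ γ = 1 := by
  have hfst (g : SL(2, ℤ)) : χ (fstEmb g) = 1 :=
    map_eq_one_of_map_T_eq_one (f := χ.comp fstEmb) (fun g => hχ _)
      (by simpa [← fstEmb_T_zpow] using hT) g
  have hlevi (g : SL(2, ℤ)) : χ (leviEmb g) = 1 :=
    map_eq_one_of_map_T_eq_one (f := χ.comp leviEmb) (fun g => hχ _)
      (by simpa [map_leviEmb_T_eq, map_translation_mid_eq hχ] using hT) g
  refine mem_of_mrange_fstEmb_le_of_mrange_leviEmb_le (M := MonoidHom.mker χ) ?_ ?_ γ
  · rintro _ ⟨g, rfl⟩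
    exact hfst g
  · rintro _ ⟨g, rfl⟩
    exact hlevi g

end SignCharacter

namespace IsEps

open ModularGroup
open scoped MatrixGroups

variable {ε : Matrix (Fin 4) (Fin 4) ℤ → ℂ} (hε : IsEps ε)

/-- The sign character as a monoid homomorphism. -/
def toMonoidHom : sp4 →* ℂ where
  toFun γ := ε γ
  map_one' := by
    have h := hε.2.1 1 sp4.one_mem 1 sp4.one_mem
    rcases hε.1 1 sp4.one_mem with h1 | h1
    · exact h1
    · norm_num [h1] at h
  map_mul' γ δ := hε.2.1 γ γ.2 δ δ.2

include hε

lemma sq_eq_one (γ : sp4) : ε γ ^ 2 = 1 := by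
  rcases hε.1 γ γ.2 with h | h <;> norm_num [h]

lemma map_translation_fst : ε (translation 1 0 0) = -1 := by
  refine (hε.1 _ (translation 1 0 0).2).resolve_left fun h => ?_
  obtain ⟨γ, hγ, hne⟩ := hε.2.2
  exact hne (map_eq_one_of_map_translation_eq_one (χ := hε.toMonoidHom) hε.sq_eq_one h ⟨γ, hγ⟩)

lemma map_translation_mid : ε (translation 0 1 0) = -1 :=
  (map_translation_mid_eq (χ := hε.toMonoidHom) hε.sq_eq_one).trans hε.map_translation_fst

lemma map_leviEmb_T : ε (leviEmb T) = -1 :=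
  (map_leviEmb_T_eq hε.toMonoidHom).trans hε.map_translation_mid

lemma map_leviEmb_S : ε (leviEmb S) = -1 :=
  (map_S_eq_map_T (f := hε.toMonoidHom.comp leviEmb) fun _ => hε.sq_eq_one _).trans hε.map_leviEmb_T

lemma map_fstEmb_S : ε (fstEmb S) = -1 :=
  (map_S_eq_map_T (f := hε.toMonoidHom.comp fstEmb) fun _ => hε.sq_eq_one _).trans
    (by rw [← hε.map_translation_fst, ← fstEmb_T_zpow, zpow_one]; rfl)

lemma map_sndEmb_neg_one : ε (sndEmb (-1)) = 1 := by
  have hS : (-1 : SL(2, ℤ)) = S ^ 2 := by decide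
  calc ε (sndEmb (-1)) = hε.toMonoidHom.comp sndEmb (S ^ 2) := by rw [hS]; rfl
    _ = 1 := by rw [map_pow]; exact hε.sq_eq_one _

lemma map_fstEmb_neg_one_mul_leviEmb_S : ε (fstEmb (-1) * leviEmb S : sp4) = -1 := by
  have hfst : ε (fstEmb (-1)) = 1 :=
    (map_sndEmb_eq_map_fstEmb hε.toMonoidHom (-1)).symm.trans hε.map_sndEmb_neg_one
  exact (hε.toMonoidHom.map_mul _ _).trans ((congrArg₂ _ hfst hε.map_leviEmb_S).trans (one_mul _))

end IsEps

/-! ### Siegel modular forms in coordinates -/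

lemma posDef_fin_two_iff {x y w : ℝ} : !![x, y; y, w].PosDef ↔ 0 < x ∧ y ^ 2 < x * w := by
  constructor
  · intro h
    have hdet := h.det_pos
    rw [Matrix.det_fin_two_of] at hdet
    exact ⟨h.diag_pos (i := 0), by linarith⟩
  · rintro ⟨hx, hdet⟩
    refine Matrix.PosDef.of_dotProduct_mulVec_pos ?_ fun v hv => ?_
    · ext i j
      fin_cases i <;> fin_cases j <;> simp
    · have hsq : 0 < (x * v 0 + y * v 1) ^ 2 + (x * w - y ^ 2) * v 1 ^ 2 := by
        rcases eq_or_ne (v 1) 0 with h1 | h1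
        · have h0 : v 0 ≠ 0 := fun h0 => hv (by ext i; fin_cases i <;> assumption)
          rw [h1]
          have := pow_pos hx 2
          nlinarith [sq_pos_of_ne_zero h0]
        · have := mul_pos (sub_pos.mpr hdet) (sq_pos_of_ne_zero h1)
          positivity
      have hform : x * (star v ⬝ᵥ !![x, y; y, w] *ᵥ v) =
          (x * v 0 + y * v 1) ^ 2 + (x * w - y ^ 2) * v 1 ^ 2 := by
        simp [dotProduct, Matrix.mulVec, Fin.sum_univ_two]
        ring
      exact pos_of_mul_pos_right (hform ▸ hsq) hx.le

/-- The symmetric matrix `(a z; z b)`, in the encoding used for points of `H2`. -/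
def symPoint (a z b : ℂ) : Fin 2 → Fin 2 → ℂ := ![![a, z], ![z, b]]

lemma symPoint_mem_H2 {a z b : ℂ} : symPoint a z b ∈ H2 ↔ (a, z, b) ∈ siegelDomain := by
  have hsymm : (Matrix.of (symPoint a z b)).IsSymm := by
    ext i j
    fin_cases i <;> fin_cases j <;> rfl
  have him : (Matrix.of fun i j => (symPoint a z b i j).im) = !![a.im, z.im; z.im, b.im] := by
    ext i j
    fin_cases i <;> fin_cases j <;> rfl
  rw [H2, Set.mem_ofPred_eq, him, posDef_fin_two_iff, mk_mem_siegelDomain]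
  exact and_iff_right hsymm

lemma eq_symPoint {τ : Fin 2 → Fin 2 → ℂ} (h : τ ∈ H2) : τ = symPoint (τ 0 0) (τ 0 1) (τ 1 1) := by
  ext i j
  fin_cases i <;> fin_cases j
  exacts [rfl, rfl, h.1.apply 0 1, rfl]

lemma differentiable_symPoint :
    Differentiable ℂ fun p : ℂ × ℂ × ℂ => symPoint p.1 p.2.1 p.2.2 := by
  refine differentiable_pi.mpr fun i => differentiable_pi.mpr fun j => ?_
  fin_cases i <;> fin_cases j <;> simp [symPoint]

lemma moeb_eq {γ : Matrix (Fin 4) (Fin 4) ℤ} {τ τ' : Fin 2 → Fin 2 → ℂ} (hd : (den γ τ).det ≠ 0)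
    (h : blk γ 0 0 * Matrix.of τ + blk γ 0 1 = Matrix.of τ' * den γ τ) : moeb γ τ = τ' := by
  unfold moeb
  rw [h, Matrix.mul_nonsing_inv_cancel_right _ _ (isUnit_iff_ne_zero.mpr hd)]
  rfl

section Transformation

open ModularGroup
open scoped MatrixGroups

variable {j : ℕ} {ε : Matrix (Fin 4) (Fin 4) ℤ → ℂ} {F : (Fin 2 → Fin 2 → ℂ) → Fin (j + 1) → ℂ}
  {a z b : ℂ} (hF : ∀ γ ∈ Sp4Z, ∀ τ ∈ H2, F (moeb γ τ) = ε γ • wt j 2 (den γ τ) (F τ))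
include hF

lemma apply_eq_of_den_eq {γ : sp4} {τ τ' : Fin 2 → Fin 2 → ℂ} (hτ : τ ∈ H2)
    {d : Matrix (Fin 2) (Fin 2) ℂ} (hden : den γ τ = d) (hd : d.det ≠ 0)
    (h : blk γ 0 0 * Matrix.of τ + blk γ 0 1 = Matrix.of τ' * d) :
    F τ' = ε γ • d.det ^ 2 • symAct j d (F τ) := by
  subst hden
  rw [← moeb_eq hd h]
  exact hF γ γ.2 τ hτ

variable (h : (a, z, b) ∈ siegelDomain)
include h

lemma apply_translation (x y w : ℤ) : F (symPoint (a + x) (z + y) (b + w)) =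
    ε (translation x y w) • F (symPoint a z b) := by
  rw [apply_eq_of_den_eq hF (γ := translation x y w) (d := 1) (symPoint_mem_H2.mpr h)]
  · simp [symAct_one]
  · ext i j
    fin_cases i <;> fin_cases j <;> simp [den, blk, translation, Matrix.mul_apply]
  · simp
  · ext i j
    fin_cases i <;> fin_cases j <;>
      simp [blk, translation, symPoint, Matrix.mul_apply, Fin.sum_univ_two]

lemma apply_leviEmb_T : F (symPoint (a + (2 * z + b)) (z + b) b) =
    ε (leviEmb T) • symAct j !![1, 0; -1, 1] (F (symPoint a z b)) := by
  rw [apply_eq_of_den_eq hF (γ := leviEmb T) (d := !![1, 0; -1, 1]) (symPoint_mem_H2.mpr h)]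
  · simp
  · ext i j
    fin_cases i <;> fin_cases j <;> simp [den, blk, leviEmb, T, Matrix.mul_apply]
  · simp
  · ext i j
    fin_cases i <;> fin_cases j <;>
      simp [blk, leviEmb, T, symPoint, Matrix.mul_apply, Fin.sum_univ_two]
    ring

lemma apply_swap : F (symPoint b z a) =
    ε (fstEmb (-1) * leviEmb S : sp4) • symAct j !![0, 1; 1, 0] (F (symPoint a z b)) := by
  have hγ : (fstEmb (-1) * leviEmb S : sp4).1 =
      !![0, 1, 0, 0; 1, 0, 0, 0; 0, 0, 0, 1; 0, 0, 1, 0] := by decide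
  rw [apply_eq_of_den_eq hF (γ := fstEmb (-1) * leviEmb S) (d := !![0, 1; 1, 0])
    (symPoint_mem_H2.mpr h)]
  · simp
  · rw [hγ]
    ext i j
    fin_cases i <;> fin_cases j <;> simp [den, blk, Matrix.mul_apply]
  · simp
  · rw [hγ]
    ext i j
    fin_cases i <;> fin_cases j <;> simp [blk, symPoint, Matrix.mul_apply, Fin.sum_univ_two]

lemma apply_sndEmb_neg_one : F (symPoint a (-z) b) =
    ε (sndEmb (-1)) • symAct j !![1, 0; 0, -1] (F (symPoint a z b)) := by
  rw [apply_eq_of_den_eq hF (γ := sndEmb (-1)) (d := !![1, 0; 0, -1]) (symPoint_mem_H2.mpr h)]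
  · simp
  · ext i j
    fin_cases i <;> fin_cases j <;> simp [den, blk, sndEmb, Matrix.mul_apply]
  · simp
  · ext i j
    fin_cases i <;> fin_cases j <;>
      simp [blk, sndEmb, symPoint, Matrix.mul_apply, Fin.sum_univ_two]

lemma apply_fstEmb_S : F (symPoint (-1 / a) (z / a) (b - z ^ 2 / a)) =
    ε (fstEmb S) • a ^ 2 • symAct j !![a, z; 0, 1] (F (symPoint a z b)) := by
  have ha : a ≠ 0 := by
    rintro rfl
    simp [mk_mem_siegelDomain] at h
  rw [apply_eq_of_den_eq hF (γ := fstEmb S) (d := !![a, z; 0, 1]) (symPoint_mem_H2.mpr h)]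
  · simp
  · ext i j
    fin_cases i <;> fin_cases j <;>
      simp [den, blk, fstEmb, S, symPoint, Matrix.mul_apply, Fin.sum_univ_two]
  · simpa using ha
  · ext i j
    fin_cases i <;> fin_cases j <;>
      simp [blk, fstEmb, S, symPoint, Matrix.mul_apply, Fin.sum_univ_two] <;> field_simp <;> ring

end Transformation

section Vanishing

variable {j : ℕ} {ε : Matrix (Fin 4) (Fin 4) ℤ → ℂ} {F : (Fin 2 → Fin 2 → ℂ) → Fin (j + 1) → ℂ}

lemma isSiegelRegular_comp_symPoint {E : Type*} [NormedAddCommGroup E] [NormedSpace ℂ E]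
    {F : (Fin 2 → Fin 2 → ℂ) → E} (hF : DifferentiableOn ℂ F H2) :
    IsSiegelRegular fun a z b => F (symPoint a z b) := by
  have hdiff : DifferentiableOn ℂ (fun p : ℂ × ℂ × ℂ => F (symPoint p.1 p.2.1 p.2.2))
      siegelDomain :=
    hF.comp differentiable_symPoint.differentiableOn fun _ hp => symPoint_mem_H2.mpr hp
  exact
    { continuousOn := hdiff.continuousOn
      differentiableOn_fst z b := hdiff.comp (f := fun a => (a, z, b)) (by fun_prop) fun _ h => h
      differentiableOn_snd a b := hdiff.comp (f := fun z => (a, z, b)) (by fun_prop) fun _ h => h }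

lemma isSymForm_comp_symPoint (hε : IsEps ε) (hdiff : DifferentiableOn ℂ F H2)
    (hF : ∀ γ ∈ Sp4Z, ∀ τ ∈ H2, F (moeb γ τ) = ε γ • wt j 2 (den γ τ) (F τ)) :
    IsSymForm j fun a z b => F (symPoint a z b) where
  toIsSiegelRegular := isSiegelRegular_comp_symPoint hdiff
  map_add_one_fst h := by
    simpa [hε.map_translation_fst] using apply_translation hF h 1 0 0
  map_add_one_snd h := by
    simpa [hε.map_translation_mid] using apply_translation hF h 0 1 0
  map_shear h := by
    simpa [symActCLM_apply, hε.map_leviEmb_T] using apply_leviEmb_T hF h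
  map_swap h := by
    rw [apply_swap hF h, hε.map_fstEmb_neg_one_mul_leviEmb_S, neg_one_smul]
    rfl
  map_neg h := by
    simpa [symActCLM_apply, hε.map_sndEmb_neg_one] using apply_sndEmb_neg_one hF h
  map_neg_one_div h := by
    simpa [hε.map_fstEmb_S] using apply_fstEmb_S hF h

theorem vanishing_S14_S16_eps_general (hε : IsEps ε) (hj : j ≤ 16) (hj12 : j ≠ 12)
    (hdiff : DifferentiableOn ℂ F H2)
    (hF : ∀ γ ∈ Sp4Z, ∀ τ ∈ H2, F (moeb γ τ) = ε γ • wt j 2 (den γ τ) (F τ)) :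
    ∀ τ ∈ H2, F τ = 0 := by
  intro τ hτ
  have h := eq_symPoint hτ
  rw [h, symPoint_mem_H2] at hτ
  rw [h]
  exact (isSymForm_comp_symPoint hε hdiff hF).eq_zero hj hj12 hτ

end Vanishing

lemma siegelCusp_eq_bot {j : ℕ} {ε : Matrix (Fin 4) (Fin 4) ℤ → ℂ} (hε : IsEps ε) (hj : j ≤ 16)
    (hj12 : j ≠ 12) : SiegelCusp j 2 Sp4Z ε = ⊥ := by
  refine (Submodule.eq_bot_iff _).mpr fun F hF => funext fun τ => ?_
  by_cases hτ : τ ∈ H2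
  · exact vanishing_S14_S16_eps_general hε hj hj12 hF.1 hF.2.1 τ hτ
  · exact hF.2.2.2 τ hτ

/-- The spaces `S_{14,2}(Γ₂,ε)` and `S_{16,2}(Γ₂,ε)` are both zero. -/
theorem vanishing_S14_S16_eps (ε : Matrix (Fin 4) (Fin 4) ℤ → ℂ) (hε : IsEps ε) :
    SiegelCusp 14 2 Sp4Z ε = ⊥ ∧ SiegelCusp 16 2 Sp4Z ε = ⊥ :=
  ⟨siegelCusp_eq_bot hε (by norm_num) (by norm_num),
    siegelCusp_eq_bot hε (by norm_num) (by norm_num)⟩
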